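/- arXiv:1905.08683 — 2 statements merged into one kernel-verified Lean document; each statement's English description precedes it below -/
import Mathlib

section
/- Graham's conjectured inequality holds for the following products: for every G ∈ {L, L₁, L₂} (the three minimal 8-vertex Lemke graphs) and every H ∈ {K₈, K₁₂, K_{4,4}, K_{6,6}}, one has π(G□H) ≤ π(G)·π(H). -/
open SimpleGraph Finset

/-- A single pebbling move on `G`: remove two pebbles from a vertex `v` with at least two
pebbles and add one pebble to an adjacent vertex `w`. -/
def PebblingMove {V : Type*} (G : SimpleGraph V) (c c' : V → ℕ) : Prop :=
  ∃ v w, G.Adj v w ∧ 2 ≤ c v ∧ c' v = c v - 2 ∧ c' w = c w + 1 ∧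
    ∀ u, u ≠ v → u ≠ w → c' u = c u

/-- Some finite sequence of pebbling moves starting from `c` places at least `t` pebbles
on the vertex `r`. -/
def NSolvable {V : Type*} (G : SimpleGraph V) (c : V → ℕ) (r : V) (t : ℕ) : Prop :=
  ∃ c', Relation.ReflTransGen (PebblingMove G) c c' ∧ t ≤ c' r

/-- A configuration `c` is `r`-solvable. -/
def Solvable {V : Type*} (G : SimpleGraph V) (c : V → ℕ) (r : V) : Prop :=
  NSolvable G c r 1

/-- The pebbling number `π(G)`: least `k` such that every configuration of size `k` is
`r`-solvable for every root `r`. -/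
noncomputable def pebblingNumber {V : Type*} (G : SimpleGraph V) [Fintype V] : ℕ :=
  sInf {k | ∀ c : V → ℕ, (∑ v, c v) = k → ∀ r, Solvable G c r}

/-- The 2-pebbling number `π₂(G, s)`: least `m` such that for every root `r`, every
configuration of size at least `m` with support of size exactly `s` can place two pebbles
on `r`. -/
noncomputable def twoPebblingNumber {V : Type*} (G : SimpleGraph V) [Fintype V] (s : ℕ) : ℕ :=
  sInf {m | ∀ (r : V) (c : V → ℕ), m ≤ ∑ v, c v →
    (Finset.univ.filter fun v => 1 ≤ c v).card = s → NSolvable G c r 2}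

/-- The Lemke graph `L` on vertices `v1, …, v8` (as `0, …, 7`). -/
def lemkeL : SimpleGraph (Fin 8) :=
  SimpleGraph.fromRel fun a b =>
    (a, b) ∈ ([(0, 1), (0, 2), (1, 3), (2, 4), (2, 5), (2, 6), (3, 4), (3, 5), (3, 6),
      (3, 7), (4, 7), (5, 7), (6, 7)] : List (Fin 8 × Fin 8))

/-- The minimal Lemke graph `L₁`. -/
def lemkeL1 : SimpleGraph (Fin 8) :=
  SimpleGraph.fromRel fun a b =>
    (a, b) ∈ ([(0, 1), (0, 2), (1, 2), (1, 3), (2, 4), (2, 5), (2, 6), (3, 4), (3, 7),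
      (4, 7), (5, 7), (6, 7)] : List (Fin 8 × Fin 8))

/-- The minimal Lemke graph `L₂`. -/
def lemkeL2 : SimpleGraph (Fin 8) :=
  SimpleGraph.fromRel fun a b =>
    (a, b) ∈ ([(0, 1), (0, 2), (1, 3), (2, 4), (2, 5), (2, 6), (3, 4), (3, 6), (3, 7),
      (4, 5), (4, 7), (5, 6), (5, 7), (6, 7)] : List (Fin 8 × Fin 8))

set_option linter.unusedSectionVars false
set_option linter.unusedSimpArgs false

/-! ## The reachability calculus -/

/-- From `c` one can reach a configuration dominating `d`. -/
def Rch {V : Type*} (G : SimpleGraph V) (c d : V → ℕ) : Prop :=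
  ∃ c', Relation.ReflTransGen (PebblingMove G) c c' ∧ d ≤ c'

section calculus
variable {V : Type*} {G : SimpleGraph V}

theorem move_add {c c' : V → ℕ} (e : V → ℕ) (h : PebblingMove G c c') :
    PebblingMove G (c + e) (c' + e) := by
  obtain ⟨v, w, ha, h2, hv, hw, hu⟩ := h
  refine ⟨v, w, ha, ?_, ?_, ?_, ?_⟩
  · simp only [Pi.add_apply]; omega
  · simp only [Pi.add_apply]; omega
  · simp only [Pi.add_apply]; omega
  · intro u h1 h2
    simp only [Pi.add_apply, hu u h1 h2]

theorem rtg_add {c c' : V → ℕ} (e : V → ℕ) (h : Relation.ReflTransGen (PebblingMove G) c c') :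
    Relation.ReflTransGen (PebblingMove G) (c + e) (c' + e) := by
  induction h with
  | refl => exact Relation.ReflTransGen.refl
  | tail _ hm ih => exact ih.tail (move_add e hm)

theorem Rch.of_le {c d : V → ℕ} (h : d ≤ c) : Rch G c d := ⟨c, Relation.ReflTransGen.refl, h⟩

theorem Rch.trans {c d e : V → ℕ} (h1 : Rch G c d) (h2 : Rch G d e) : Rch G c e := by
  obtain ⟨c', hc, hd⟩ := h1
  obtain ⟨d', hd', he⟩ := h2
  obtain ⟨k, rfl⟩ := exists_add_of_le hd
  refine ⟨d' + k, hc.trans (rtg_add k hd'), he.trans ?_⟩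
  exact le_add_of_nonneg_right (by intro v; exact Nat.zero_le _)

theorem Rch.add_right {c d : V → ℕ} (e : V → ℕ) (h : Rch G c d) : Rch G (c + e) (d + e) := by
  obtain ⟨c', hc, hd⟩ := h
  exact ⟨c' + e, rtg_add e hc, by gcongr⟩

theorem Rch.add {c d c' d' : V → ℕ} (h : Rch G c d) (h' : Rch G c' d') :
    Rch G (c + c') (d + d') := by
  refine (h.add_right c').trans ?_
  rw [add_comm d c', add_comm d d']
  exact h'.add_right d

theorem Rch.sum {ι : Type*} (S : Finset ι) (f g : ι → V → ℕ) (h : ∀ i ∈ S, Rch G (f i) (g i)) :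
    Rch G (∑ i ∈ S, f i) (∑ i ∈ S, g i) := by
  classical
  induction S using Finset.induction_on with
  | empty => simpa using Rch.of_le (le_refl _)
  | insert a S ha ih =>
    rw [Finset.sum_insert ha, Finset.sum_insert ha]
    exact (h a (Finset.mem_insert_self a S)).add
      (ih fun i hi => h i (Finset.mem_insert_of_mem hi))

theorem Rch.single_move [DecidableEq V] {v w : V} (h : G.Adj v w) :
    Rch G (Pi.single v 2) (Pi.single w 1) := by
  have hne : v ≠ w := h.ne
  refine ⟨Pi.single w 1, Relation.ReflTransGen.single ⟨v, w, h, ?_, ?_, ?_, ?_⟩, le_refl _⟩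
  · simp
  · simp [hne]
  · simp [hne.symm]
  · intro u h1 h2
    simp [h1, h2]

theorem Rch.single_moves [DecidableEq V] {v w : V} (h : G.Adj v w) (k : ℕ) :
    Rch G (Pi.single v (2 * k)) (Pi.single w k) := by
  induction k with
  | zero => simpa using Rch.of_le (le_refl _)
  | succ k ih =>
    have := ih.add (Rch.single_move h)
    rw [← Pi.single_add, ← Pi.single_add] at this
    simpa [mul_add] using this

theorem Rch.nsolvable [DecidableEq V] {c : V → ℕ} {r : V} {t : ℕ} (h : Rch G c (Pi.single r t)) :
    NSolvable G c r t := by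
  obtain ⟨c', hc, hd⟩ := h
  exact ⟨c', hc, by simpa using hd r⟩

end calculus

section box
variable {V W : Type*} [Fintype V] [DecidableEq V] [Fintype W] [DecidableEq W]
  {G : SimpleGraph V} {H : SimpleGraph W}

/-- A configuration on the product, given by its columns. -/
def unc (C : W → V → ℕ) : V × W → ℕ := fun p => C p.2 p.1

/-- Reachability on the product, for configurations given by columns. -/
def RR (G : SimpleGraph V) (H : SimpleGraph W) (C D : W → V → ℕ) : Prop :=
  Rch (G.boxProd H) (unc C) (unc D)

theorem RR.trans {C D F : W → V → ℕ} (h1 : RR G H C D) (h2 : RR G H D F) : RR G H C F :=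
  Rch.trans h1 h2

theorem RR.of_le {C D : W → V → ℕ} (h : ∀ k v, D k v ≤ C k v) : RR G H C D :=
  Rch.of_le fun p => h p.2 p.1

theorem RR.add {C D C' D' : W → V → ℕ} (h1 : RR G H C D) (h2 : RR G H C' D') :
    RR G H (C + C') (D + D') := Rch.add h1 h2

theorem RR.sum {ι : Type*} (S : Finset ι) (f g : ι → W → V → ℕ)
    (h : ∀ i ∈ S, RR G H (f i) (g i)) :
    RR G H (∑ i ∈ S, f i) (∑ i ∈ S, g i) := by
  have := Rch.sum S (fun i => unc (f i)) (fun i => unc (g i)) h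
  have e : ∀ f : ι → W → V → ℕ, (∑ i ∈ S, unc (f i)) = unc (∑ i ∈ S, f i) := by
    intro f
    funext p
    simp [unc, Finset.sum_apply]
  rw [e, e] at this
  exact this

theorem RR.col {f f' : V → ℕ} (h : W) (hf : Rch G f f') :
    RR G H (Pi.single h f) (Pi.single h f') := by
  obtain ⟨c', hc, hd⟩ := hf
  refine ⟨unc (Pi.single h c'), ?_, ?_⟩
  · clear hd
    induction hc with
    | refl => exact Relation.ReflTransGen.refl
    | @tail b c _ hm ih =>
      refine ih.tail ?_
      obtain ⟨v, w, ha, h2, hv, hw, hu⟩ := hm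
      refine ⟨(v, h), (w, h), ?_, ?_, ?_, ?_, ?_⟩
      · simp [SimpleGraph.boxProd_adj, ha]
      · simpa [unc] using h2
      · simpa [unc] using hv
      · simpa [unc] using hw
      · rintro ⟨u, k⟩ h1 h3
        by_cases hk : k = h
        · subst hk
          have := hu u (by rintro rfl; exact h1 rfl) (by rintro rfl; exact h3 rfl)
          simpa [unc] using this
        · simp [unc, hk]
  · rintro ⟨u, k⟩
    by_cases hk : k = h
    · subst hk
      simpa [unc] using hd u
    · simp [unc, hk]

theorem RR.vert {h h' : W} (ha : H.Adj h h') (f : V → ℕ) :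
    RR G H (Pi.single h (fun v => 2 * f v)) (Pi.single h' f) := by
  have key := Rch.sum (G := G.boxProd H) (Finset.univ : Finset V)
    (fun v => Pi.single (v, h) (2 * f v)) (fun v => Pi.single (v, h') (f v))
    (fun v _ => Rch.single_moves (by simp [SimpleGraph.boxProd_adj, ha]) (f v))
  have e : ∀ (k : W) (g : V → ℕ),
      (∑ v, (Pi.single (v, k) (g v) : V × W → ℕ)) = unc (Pi.single k g) := by
    intro k g
    funext ⟨u, l⟩
    rw [Finset.sum_apply, Finset.sum_eq_single u]
    · by_cases hl : l = k
      · subst hl; simp [unc]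
      · simp [unc, hl, Pi.single_apply]
    · intro b _ hb
      simp [Pi.single_apply, Ne.symm hb]
    · simp
  rw [e h' f, e h (fun v => 2 * f v)] at key
  exact key

/-- Move `F k` pebbles from each column `k` to the column `h`. -/
theorem RR.moves (C F : W → V → ℕ) (h : W) (hF : ∀ k v, 2 * F k v ≤ C k v)
    (hA : ∀ k, F k ≠ 0 → H.Adj k h) :
    RR G H C ((fun k v => C k v - 2 * F k v) + Pi.single h (∑ k, F k)) := by
  have e1 : C = (fun k v => C k v - 2 * F k v) + ∑ k, Pi.single k (fun v => 2 * F k v) := by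
    funext k v
    rw [Pi.add_apply, Finset.sum_apply, Finset.sum_eq_single k]
    · simp only [Pi.single_eq_same, Pi.add_apply]
      have := hF k v
      omega
    · intro b _ hb
      simp [Pi.single_apply, Ne.symm hb]
    · simp
  have e2 : (Pi.single h (∑ k, F k) : W → V → ℕ) = ∑ k, Pi.single h (F k) := by
    funext k v
    by_cases hk : k = h
    · subst hk; simp
    · simp [hk, Finset.sum_apply]
  conv_lhs => rw [e1]
  rw [e2]
  refine RR.add (RR.of_le fun _ _ => le_refl _) (RR.sum _ _ _ ?_)
  intro k _
  by_cases hk : F k = 0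
  · rw [hk]
    apply RR.of_le
    intro k v
    simp
  · exact RR.vert (hA k hk) (F k)

end box

/-! ## Sizes -/

section sizes
variable {V : Type*} [Fintype V] [DecidableEq V]

/-- The size of a configuration. -/
def pS (f : V → ℕ) : ℕ := ∑ v, f v
/-- The number of disjoint pairs. -/
def xS (f : V → ℕ) : ℕ := ∑ v, f v / 2
/-- Half of (size plus number of odd entries). -/
def yS (f : V → ℕ) : ℕ := ∑ v, (f v + 1) / 2
/-- Half of a configuration. -/
def hf (f : V → ℕ) : V → ℕ := fun v => f v / 2

theorem pS_eq (f : V → ℕ) : pS f = xS f + yS f := by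
  unfold pS xS yS
  rw [← Finset.sum_add_distrib]
  exact Finset.sum_congr rfl fun v _ => by omega

theorem xS_le_yS (f : V → ℕ) : xS f ≤ yS f :=
  Finset.sum_le_sum fun v _ => by omega

theorem yS_le (f : V → ℕ) : yS f ≤ xS f + Fintype.card V := by
  unfold xS yS
  rw [Fintype.card, Finset.card_eq_sum_ones, ← Finset.sum_add_distrib]
  exact Finset.sum_le_sum fun v _ => by omega

theorem pS_hf (f : V → ℕ) : pS (hf f) = xS f := rfl

theorem pS_add (f g : V → ℕ) : pS (f + g) = pS f + pS g := by
  unfold pS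
  simp [Finset.sum_add_distrib]

theorem pS_single (v : V) (k : ℕ) : pS (Pi.single v k : V → ℕ) = k := by
  simp [pS]

theorem pS_sum {ι : Type*} (S : Finset ι) (f : ι → V → ℕ) :
    pS (∑ i ∈ S, f i) = ∑ i ∈ S, pS (f i) := by
  unfold pS
  rw [Finset.sum_comm]
  simp [Finset.sum_apply]

theorem pS_mono {f g : V → ℕ} (h : f ≤ g) : pS f ≤ pS g := Finset.sum_le_sum fun v _ => h v

theorem yS_mono {f g : V → ℕ} (h : f ≤ g) : yS f ≤ yS g :=
  Finset.sum_le_sum fun v _ => by have : f v ≤ g v := h v; omega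

theorem yS_add_two (f g : V → ℕ) : yS (f + fun v => 2 * g v) = yS f + pS g := by
  unfold yS pS
  rw [← Finset.sum_add_distrib]
  exact Finset.sum_congr rfl fun v _ => by simp only [Pi.add_apply]; omega

theorem yS_single (f : V → ℕ) (s : V) (k : ℕ) : yS (f + Pi.single s (2 * k)) = yS f + k := by
  have : (Pi.single s (2 * k) : V → ℕ) = fun v => 2 * (Pi.single s k : V → ℕ) v := by
    funext v
    by_cases h : v = s
    · subst h; simp
    · simp [h]
  rw [this, yS_add_two, pS_single]

/-- Sub-configurations of any prescribed smaller size exist. -/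
theorem exists_sub (h : V → ℕ) (k : ℕ) (hk : k ≤ pS h) : ∃ f : V → ℕ, f ≤ h ∧ pS f = k := by
  induction k with
  | zero => exact ⟨0, fun v => Nat.zero_le _, by simp [pS]⟩
  | succ k ih =>
    obtain ⟨f, hf, hp⟩ := ih (by omega)
    have : ∃ v, f v < h v := by
      by_contra hc
      push Not at hc
      have := pS_mono (f := h) (g := f) hc
      omega
    obtain ⟨v, hv⟩ := this
    refine ⟨f + Pi.single v 1, ?_, by rw [pS_add, pS_single, hp]⟩
    intro u
    by_cases hu : u = v
    · subst hu; simp only [Pi.add_apply, Pi.single_eq_same]; omega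
    · simpa [hu] using hf u

theorem exists_pair {f : V → ℕ} (h : 1 ≤ xS f) : ∃ g, 2 ≤ f g := by
  by_contra hc
  push Not at hc
  have : xS f = 0 := Finset.sum_eq_zero fun v _ => by have := hc v; omega
  omega

end sizes

/-! ## Columns which almost have the odd two-pebbling property -/

/-- Every configuration of size 8 reaches the root; and every configuration with
`size + odd ≥ 18` other than the single exceptional one `E` puts two pebbles on the root. -/
structure Good {V : Type*} [Fintype V] [DecidableEq V] (G : SimpleGraph V) (r : V)
    (E : V → ℕ) (s : V) : Prop where
  one : ∀ f : V → ℕ, 8 ≤ pS f → Rch G f (Pi.single r 1)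
  two : ∀ f : V → ℕ, 9 ≤ yS f → f ≠ E → Rch G f (Pi.single r 2)
  half : hf E = Pi.single s 4
  yE : yS E = 9
  card : Fintype.card V = 8

section star
variable {V W : Type*} [Fintype V] [DecidableEq V] [Fintype W] [DecidableEq W]
  {G : SimpleGraph V} {H : SimpleGraph W} {r s : V} {E : V → ℕ} {a₀ : W}

/-- The configuration cannot put a pebble on `(r, a₀)`. -/
def US (G : SimpleGraph V) (H : SimpleGraph W) (r : V) (a₀ : W) (C : W → V → ℕ) : Prop :=
  ¬ RR G H C (Pi.single a₀ (Pi.single r 1))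

theorem US.mono {C D : W → V → ℕ} (h : US G H r a₀ C) (hR : RR G H C D) : US G H r a₀ D :=
  fun h' => h (hR.trans h')

theorem Good.xE (hG : Good G r E s) : xS E = 4 := by
  rw [← pS_hf, hG.half, pS_single]

theorem Good.pE (hG : Good G r E s) : pS E = 13 := by
  rw [pS_eq, hG.xE, hG.yE]

theorem single_apply_le {C : W → V → ℕ} {a : W} {f : V → ℕ} (h : f ≤ C a) (k : W) (v : V) :
    (Pi.single a f : W → V → ℕ) k v ≤ C k v := by
  by_cases hk : k = a
  · subst hk; simpa using h v
  · simp [hk]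

theorem RR.get {C : W → V → ℕ} {a : W} {f : V → ℕ} (h : Rch G (C a) f) :
    RR G H C (Pi.single a f) :=
  (RR.of_le (single_apply_le (le_refl (C a)))).trans (RR.col a h)

theorem RR.get₂ {C : W → V → ℕ} {a b : W} (hab : a ≠ b) {f g : V → ℕ} (h : Rch G (C a) f)
    (h' : Rch G (C b) g) : RR G H C (Pi.single a f + Pi.single b g) := by
  refine RR.trans (D := Pi.single a (C a) + Pi.single b (C b)) (RR.of_le ?_)
    (RR.add (RR.col a h) (RR.col b h'))
  intro k v
  by_cases hk : k = a
  · subst hk; simp [hab]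
  · by_cases hk' : k = b
    · subst hk'; simp [hk]
    · simp [hk, hk']

theorem two_single (r : V) (k : ℕ) :
    (fun v => 2 * (Pi.single r k : V → ℕ) v) = Pi.single r (2 * k) := by
  funext v
  by_cases h : v = r
  · subst h; simp
  · simp [h]

theorem RR.down {a b : W} (h : H.Adj a b) (r : V) :
    RR G H (Pi.single a (Pi.single r 2)) (Pi.single b (Pi.single r 1)) := by
  have := RR.vert (G := G) h (Pi.single r 1)
  rwa [two_single] at this

/-- Two pebbles on a neighbour column suffice. -/
theorem US.no_two {C : W → V → ℕ} (hU : US G H r a₀ C) {b : W} (hb : H.Adj b a₀) :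
    ¬ RR G H C (Pi.single b (Pi.single r 2)) := fun h => hU (h.trans (RR.down hb r))

theorem US.no_one_one {C D : W → V → ℕ} (hU : US G H r a₀ C) {b : W} (hb : H.Adj b a₀)
    (h : RR G H C D)
    (h' : RR G H D (Pi.single b (Pi.single r 1) + Pi.single b (Pi.single r 1))) : False := by
  refine hU.no_two hb (h.trans ?_)
  rw [← Pi.single_add, ← Pi.single_add] at h'
  exact h'

theorem US.no_mixed (hG : Good G r E s) {C : W → V → ℕ} (hU : US G H r a₀ C) {a b : W}
    (hb : H.Adj b a₀) (hab : H.Adj a b) (h1 : 8 ≤ pS (C b)) (h2 : 9 ≤ yS (C a))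
    (h3 : C a ≠ E) : False := by
  refine hU.no_one_one hb (RR.get₂ hab.ne (hG.two _ h2 h3) (hG.one _ h1)) ?_
  exact RR.add (RR.down hab r) (RR.of_le fun _ _ => le_refl _)

theorem US.no_two_two (hG : Good G r E s) {C : W → V → ℕ} (hU : US G H r a₀ C) {a a' b : W}
    (hb : H.Adj b a₀) (hab : H.Adj a b) (hab' : H.Adj a' b) (hne : a ≠ a') (h2 : 9 ≤ yS (C a))
    (h3 : C a ≠ E) (h2' : 9 ≤ yS (C a')) (h3' : C a' ≠ E) : False := by
  refine hU.no_one_one hb (RR.get₂ hne (hG.two _ h2 h3) (hG.two _ h2' h3')) ?_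
  exact RR.add (RR.down hab r) (RR.down hab' r)

/-- Bulk move of all pairs of the columns in `S` to the column `h`. -/
theorem RR.pull (C : W → V → ℕ) (S : Finset W) (h : W) (hS : ∀ k ∈ S, H.Adj k h) :
    RR G H C (fun k => if k = h then C h + ∑ k ∈ S, hf (C k) else if k ∈ S then 0 else C k) := by
  have hh : h ∉ S := fun hc => (hS h hc).ne rfl
  refine (RR.moves C (fun k => if k ∈ S then hf (C k) else 0) h ?_ ?_).trans (RR.of_le ?_)
  · intro k v
    by_cases hk : k ∈ S
    · simp only [hk, if_true, hf]; omega
    · simp [hk]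
  · intro k hk
    by_cases hk' : k ∈ S
    · exact hS k hk'
    · simp [hk'] at hk
  · intro k v
    by_cases hk : k = h
    · subst hk
      simp [hh, Finset.sum_ite_mem, Finset.sum_apply]
    · by_cases hk' : k ∈ S
      · simp [hk, hk']
      · simp [hk, hk']

/-- Move `f` pebbles from the column `a` to the column `h`. -/
theorem RR.move1 (C : W → V → ℕ) {a h : W} (hA : H.Adj a h) (f : V → ℕ)
    (hf : ∀ v, 2 * f v ≤ C a v) :
    RR G H C (fun k => if k = h then C h + f else if k = a then (fun v => C a v - 2 * f v)
      else C k) := by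
  refine (RR.moves C (Pi.single a f) h ?_ ?_).trans (RR.of_le ?_)
  · intro k v
    by_cases hk : k = a
    · subst hk; simpa using hf v
    · simp [hk]
  · intro k hk
    by_cases hk' : k = a
    · subst hk'; exact hA
    · simp [hk'] at hk
  · intro k v
    have hs : (∑ k, (Pi.single a f : W → V → ℕ) k) = f := by
      rw [Finset.sum_eq_single a]
      · simp
      · intro b _ hb; simp [hb]
      · simp
    rw [hs]
    by_cases hk : k = h
    · subst hk
      simp [hA.ne.symm]
    · by_cases hk' : k = a
      · subst hk'; simp [hk]
      · simp [hk, hk']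

theorem US.star1 (hG : Good G r E s) {C : W → V → ℕ} (hU : US G H r a₀ C) (B : Finset W)
    (hB : ∀ b ∈ B, H.Adj b a₀) : pS (C a₀) + ∑ b ∈ B, xS (C b) ≤ 7 := by
  by_contra hc
  refine hU ((RR.pull C B a₀ hB).trans (RR.get (hG.one _ ?_)))
  rw [if_pos rfl, pS_add, pS_sum]
  simp only [pS_hf]
  omega

theorem US.star2 (hG : Good G r E s) {C : W → V → ℕ} (hU : US G H r a₀ C) {b : W}
    (hb : H.Adj b a₀) (h : C b ≠ E) : yS (C b) ≤ 8 := by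
  by_contra hc
  exact hU.no_two hb (RR.get (hG.two _ (by omega) h))

theorem US.star3 (hG : Good G r E s) {C : W → V → ℕ} (hU : US G H r a₀ C) {b : W}
    (hb : H.Adj b a₀) : yS (C b) ≤ 9 := by
  by_cases h : C b = E
  · rw [h, hG.yE]
  · have := hU.star2 hG hb h; omega

theorem US.star4 (hG : Good G r E s) {C : W → V → ℕ} (hU : US G H r a₀ C) (B : Finset W)
    (hB : ∀ b ∈ B, H.Adj b a₀) (h : ∀ b ∈ B, C b ≠ E) :
    pS (C a₀) + ∑ b ∈ B, pS (C b) ≤ 8 * B.card + 7 := by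
  have h1 := hU.star1 hG B hB
  have h2 : ∑ b ∈ B, yS (C b) ≤ B.card • 8 :=
    Finset.sum_le_card_nsmul _ _ _ fun b hb => hU.star2 hG (hB b hb) (h b hb)
  have h3 : ∑ b ∈ B, pS (C b) = ∑ b ∈ B, xS (C b) + ∑ b ∈ B, yS (C b) := by
    rw [← Finset.sum_add_distrib]
    exact Finset.sum_congr rfl fun b _ => pS_eq _
  rw [smul_eq_mul] at h2
  omega

/-- Only one neighbour column is exceptional. -/
theorem US.star5 (hG : Good G r E s) {C : W → V → ℕ} (hU : US G H r a₀ C) {b b' : W}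
    (hb : H.Adj b a₀) (hb' : H.Adj b' a₀) (hne : b ≠ b') : xS (C b) + xS (C b') ≤ 7 := by
  have := hU.star1 hG {b, b'} (by
    intro k hk
    simp only [Finset.mem_insert, Finset.mem_singleton] at hk
    rcases hk with rfl | rfl <;> assumption)
  rw [Finset.sum_pair hne] at this
  omega

theorem sum_pS (B : Finset W) (C : W → V → ℕ) :
    ∑ b ∈ B, pS (C b) = ∑ b ∈ B, xS (C b) + ∑ b ∈ B, yS (C b) := by
  rw [← Finset.sum_add_distrib]
  exact Finset.sum_congr rfl fun b _ => pS_eq _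

theorem sum_le_mul (B : Finset W) (f : W → ℕ) (k : ℕ) (h : ∀ b ∈ B, f b ≤ k) :
    ∑ b ∈ B, f b ≤ k * B.card := by
  have := Finset.sum_le_card_nsmul B f k h
  rwa [smul_eq_mul, mul_comm] at this

theorem Good.ne_add (hG : Good G r E s) (g : V) : E + Pi.single g 1 ≠ E := by
  intro h
  have := congrArg pS h
  rw [pS_add, pS_single] at this
  omega

theorem Good.y_add (hG : Good G r E s) (g : V) : 9 ≤ yS (E + Pi.single g 1) := by
  have := yS_mono (f := E) (g := E + Pi.single g 1) (fun v => by simp)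
  rw [hG.yE] at this
  exact this

theorem Good.two_half_le (hG : Good G r E s) (v : V) : 2 * (Pi.single s 4 : V → ℕ) v ≤ E v := by
  rw [← hG.half]
  unfold hf
  omega

/-- The case of complete graphs. -/
theorem complete_case (hG : Good G r E s) (C : W → V → ℕ) (B : Finset W)
    (hB : ∀ b ∈ B, H.Adj b a₀) (hBB : ∀ b ∈ B, ∀ b' ∈ B, b ≠ b' → H.Adj b b')
    (hn : 2 ≤ B.card) (ht : 8 * B.card + 8 ≤ pS (C a₀) + ∑ b ∈ B, pS (C b)) :
    RR G H C (Pi.single a₀ (Pi.single r 1)) := by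
  by_contra hU
  change US G H r a₀ C at hU
  by_cases hE : ∃ e ∈ B, C e = E
  swap
  · push Not at hE
    have := hU.star4 hG B hB hE
    omega
  obtain ⟨e, heB, he⟩ := hE
  have hcard : (B.erase e).card = B.card - 1 := Finset.card_erase_of_mem heB
  have hoth : ∀ b ∈ B.erase e, yS (C b) ≤ 8 ∧ xS (C b) = 0 := by
    intro b hb
    have hbe := Finset.ne_of_mem_erase hb
    have hbB := Finset.mem_of_mem_erase hb
    constructor
    · refine hU.star2 hG (hB b hbB) ?_
      intro hc
      have := hU.star5 hG (hB b hbB) (hB e heB) hbe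
      rw [hc, he, hG.xE] at this
      omega
    · by_contra hx
      obtain ⟨g, hg⟩ := exists_pair (f := C b) (by omega)
      have hadj := hBB b hbB e heB hbe
      have hU' := hU.mono (RR.move1 C hadj (Pi.single g 1) (by
        intro v
        by_cases hv : v = g
        · subst hv; simpa using hg
        · simp [hv]))
      refine hU'.no_two (hB e heB) (RR.get ?_)
      rw [if_pos rfl, he]
      exact hG.two _ (hG.y_add g) (hG.ne_add g)
  have hne : (B.erase e).Nonempty := by
    rw [← Finset.card_pos]; omega
  obtain ⟨b, hb⟩ := hne
  have hbe := Finset.ne_of_mem_erase hb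
  have hbB := Finset.mem_of_mem_erase hb
  have h1 := hU.star1 hG {e} (by simpa using hB e heB)
  rw [Finset.sum_singleton, he, hG.xE] at h1
  rw [← Finset.add_sum_erase _ _ heB, ← Finset.add_sum_erase _ _ hb, he, hG.pE] at ht
  have hcard2 : ((B.erase e).erase b).card = B.card - 2 := by
    rw [Finset.card_erase_of_mem hb, hcard]; omega
  have h2 := sum_le_mul ((B.erase e).erase b) (fun b => pS (C b)) 8 (by
    intro k hk
    have := hoth k (Finset.mem_of_mem_erase hk)
    rw [pS_eq]; omega)
  rw [hcard2] at h2
  have h3 := hoth b hb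
  have h4 := pS_eq (C b)
  have hU' := hU.mono (RR.move1 C (hBB e heB b hbB hbe.symm) (Pi.single s 4) (by
    intro v; rw [he]; exact hG.two_half_le v))
  have h5 := hU'.star3 hG (hB b hbB)
  rw [if_pos rfl, yS_single _ _ 2] at h5
  omega

end star

/-! ## The case of complete bipartite graphs -/

section bip
variable {V W : Type*} [Fintype V] [DecidableEq V] [Fintype W] [DecidableEq W]
  {G : SimpleGraph V} {H : SimpleGraph W} {r s : V} {E : V → ℕ} {a₀ : W}

/-- A spare pair next to all the neighbour columns. -/
theorem US.spare (hG : Good G r E s) {C : W → V → ℕ} (hU : US G H r a₀ C) (B : Finset W)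
    (hB : ∀ b ∈ B, H.Adj b a₀) {a : W} (haB : ∀ b ∈ B, H.Adj a b) (ha0 : a₀ ≠ a) (g : V)
    (hg : 2 ≤ C a g) (hn : 2 ≤ B.card)
    (ht : 8 * B.card + 7 ≤ pS (C a₀) + ∑ b ∈ B, pS (C b)) : False := by
  have hmv : ∀ j ∈ B, RR G H C (fun k => if k = j then C j + Pi.single g 1 else if k = a then
      (fun v => C a v - 2 * (Pi.single g 1 : V → ℕ) v) else C k) := fun j hj =>
    RR.move1 C (haB j hj) (Pi.single g 1) (by
      intro v
      by_cases hv : v = g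
      · subst hv; simpa using hg
      · simp [hv])
  have hnE : ∀ b ∈ B, C b ≠ E := by
    intro b hb hc
    refine (hU.mono (hmv b hb)).no_two (hB b hb) (RR.get ?_)
    rw [if_pos rfl, hc]
    exact hG.two _ (hG.y_add g) (hG.ne_add g)
  have hx : ∀ j ∈ B, 4 ≤ xS (C j) := by
    intro j hj
    have hEj : C j + Pi.single g 1 = E := by
      by_contra hne
      have h4 := (hU.mono (hmv j hj)).star4 hG B hB (by
        intro b hb
        by_cases hbj : b = j
        · subst hbj; simpa using hne
        · rw [if_neg hbj, if_neg (haB b hb).ne.symm]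
          exact hnE b hb)
      rw [if_neg (hB j hj).ne.symm, if_neg ha0, ← Finset.add_sum_erase _ _ hj, if_pos rfl,
        pS_add, pS_single, Finset.sum_congr rfl (g := fun b => pS (C b)) (by
          intro b hb
          rw [if_neg (Finset.ne_of_mem_erase hb),
            if_neg (haB b (Finset.mem_of_mem_erase hb)).ne.symm])] at h4
      rw [← Finset.add_sum_erase _ _ hj] at ht
      omega
    have h1 := congrArg pS hEj
    rw [pS_add, pS_single, hG.pE, pS_eq] at h1
    have h2 := hU.star2 hG (hB j hj) (hnE j hj)
    omega
  obtain ⟨b, hb, b', hb', hne⟩ := Finset.one_lt_card.1 (show 1 < B.card by omega)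
  have := hU.star5 hG (hB b hb) (hB b' hb') hne
  have := hx b hb
  have := hx b' hb'
  omega

theorem US.pull_bound (hG : Good G r E s) {C : W → V → ℕ} (hU : US G H r a₀ C) (A B : Finset W)
    (hB : ∀ b ∈ B, H.Adj b a₀) (hA : a₀ ∉ A) (hAB : ∀ a ∈ A, ∀ b ∈ B, H.Adj a b)
    {j : W} (hj : j ∈ B) :
    pS (C a₀) + pS (C j) + ∑ a ∈ A, xS (C a) + ∑ b ∈ B.erase j, xS (C b) ≤ 16 := by
  have hU' := hU.mono (RR.pull C A j (fun k hk => hAB k hk j hj))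
  have h1 := hU'.star1 hG B hB
  have h2 := hU'.star3 hG (hB j hj)
  rw [if_neg (hB j hj).ne.symm, if_neg hA, ← Finset.add_sum_erase _ _ hj, if_pos rfl,
    Finset.sum_congr rfl (g := fun b => xS (C b)) (by
      intro b hb
      rw [if_neg (Finset.ne_of_mem_erase hb), if_neg (fun hc =>
        (hAB b hc b (Finset.mem_of_mem_erase hb)).ne rfl)])] at h1
  rw [if_pos rfl] at h2
  have h3 := pS_eq (C j + ∑ k ∈ A, hf (C k))
  rw [pS_add, pS_sum] at h3
  simp only [pS_hf] at h3
  omega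

/-- Case B: some column at distance two is good for two pebbles. -/
theorem US.caseB (hG : Good G r E s) {C : W → V → ℕ} (hU : US G H r a₀ C) (A B : Finset W)
    (hB : ∀ b ∈ B, H.Adj b a₀) (hA : a₀ ∉ A) (hAB : ∀ a ∈ A, ∀ b ∈ B, H.Adj a b)
    {n : ℕ} (hn : n = 4 ∨ n = 6) (hBc : B.card = n) (hAc : A.card + 1 = n)
    (ht : 16 * n ≤ pS (C a₀) + ∑ a ∈ A, pS (C a) + ∑ b ∈ B, pS (C b))
    {a1 : W} (ha1 : a1 ∈ A) (hY1 : 9 ≤ yS (C a1)) (hE1 : C a1 ≠ E) : False := by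
  obtain ⟨j0, hj0⟩ : B.Nonempty := by rw [← Finset.card_pos]; omega
  have hA' : ∀ a ∈ A.erase a1, pS (C a) ≤ 8 + n * xS (C a) := by
    intro a ha
    have hne := Finset.ne_of_mem_erase ha
    have haA := Finset.mem_of_mem_erase ha
    by_cases hE : C a = E
    · rw [hE, hG.pE, hG.xE]; omega
    · have hy : yS (C a) ≤ 8 := by
        by_contra hc
        exact hU.no_two_two hG (hB j0 hj0) (hAB a1 ha1 j0 hj0) (hAB a haA j0 hj0) hne.symm hY1 hE1
          (by omega) hE
      have := pS_eq (C a)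
      have : 1 * xS (C a) ≤ n * xS (C a) := Nat.mul_le_mul_right _ (by omega)
      omega
  have hA'' : ∑ a ∈ A.erase a1, pS (C a) ≤
      8 * (A.erase a1).card + n * ∑ a ∈ A.erase a1, xS (C a) := by
    refine (Finset.sum_le_sum hA').trans ?_
    rw [Finset.sum_add_distrib, ← Finset.mul_sum, Finset.sum_const, smul_eq_mul, mul_comm]
  rw [Finset.card_erase_of_mem ha1] at hA''
  have hI : ∀ j ∈ B, pS (C j) + (∑ a ∈ A.erase a1, xS (C a) + (yS (C a1) - 10)) ≤ 7 := by
    intro j hj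
    by_contra hc
    have hcard := yS_le (C a1)
    rw [hG.card] at hcard
    obtain ⟨f, hf1, hf2⟩ := exists_sub (hf (C a1)) (yS (C a1) - 10) (by rw [pS_hf]; omega)
    have hf3 : ∀ v, 2 * f v ≤ C a1 v := by
      intro v
      have : f v ≤ C a1 v / 2 := hf1 v
      omega
    have hja : j ≠ a1 := (hAB a1 ha1 j hj).ne.symm
    have hU1 := hU.mono (RR.move1 C (hAB a1 ha1 j hj) f hf3)
    have hU2 := hU1.mono (RR.pull _ (A.erase a1) j
      (fun k hk => hAB k (Finset.mem_of_mem_erase hk) j hj))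
    refine hU2.no_mixed hG (a := a1) (b := j) (hB j hj) (hAB a1 ha1 j hj) ?_ ?_ ?_
    · rw [if_pos rfl, if_pos rfl, pS_add, pS_add, pS_sum, Finset.sum_congr rfl
        (g := fun k => xS (C k)) (by
          intro k hk
          rw [if_neg (hAB k (Finset.mem_of_mem_erase hk) j hj).ne,
            if_neg (Finset.ne_of_mem_erase hk), pS_hf])]
      omega
    all_goals
      rw [if_neg hja.symm, if_neg (Finset.notMem_erase a1 A), if_neg hja.symm, if_pos rfl]
      have hy : yS (C a1) = yS (fun v => C a1 v - 2 * f v) + pS f := by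
        rw [← yS_add_two]
        congr 1
        funext v
        have := hf3 v
        simp only [Pi.add_apply]
        omega
    · omega
    · intro hEq
      rw [hEq, hG.yE] at hy
      have hz : pS f = 0 := by omega
      apply hE1
      rw [← hEq]
      funext v
      have : f v = 0 := (Finset.sum_eq_zero_iff.1 hz) v (Finset.mem_univ v)
      omega
  have hII : ∀ j ∈ B, pS (C j) + (pS (C a₀) + (∑ a ∈ A.erase a1, xS (C a) + xS (C a1))) ≤ 16 := by
    intro j hj
    have := hU.pull_bound hG A B hB hA hAB hj
    rw [← Finset.add_sum_erase _ _ ha1] at this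
    omega
  have hI0 := hI j0 hj0
  have hI' := sum_le_mul B _ 7 hI
  have hII' := sum_le_mul B _ 16 hII
  rw [Finset.sum_add_distrib, Finset.sum_const, smul_eq_mul, hBc] at hI' hII'
  rw [← Finset.add_sum_erase A _ ha1] at ht
  have hp := pS_eq (C a1)
  have hxy := xS_le_yS (C a1)
  rcases hn with rfl | rfl <;> omega

/-- Case A1: some column at distance two is exceptional. -/
theorem US.caseA1 (hG : Good G r E s) {C : W → V → ℕ} (hU : US G H r a₀ C) (A B : Finset W)
    (hB : ∀ b ∈ B, H.Adj b a₀) (hA : a₀ ∉ A) (hAB : ∀ a ∈ A, ∀ b ∈ B, H.Adj a b)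
    {n : ℕ} (hn : n = 4 ∨ n = 6) (hBc : B.card = n) (hAc : A.card + 1 = n)
    (ht : 16 * n ≤ pS (C a₀) + ∑ a ∈ A, pS (C a) + ∑ b ∈ B, pS (C b))
    (hAE : ∀ a ∈ A, 9 ≤ yS (C a) → C a = E) {a1 : W} (ha1 : a1 ∈ A) (hE1 : C a1 = E) :
    False := by
  obtain ⟨j0, hj0⟩ : B.Nonempty := by rw [← Finset.card_pos]; omega
  obtain ⟨ε, hε⟩ : ∃ ε, ε = ∑ a ∈ A, (if C a = E then 1 else 0) := ⟨_, rfl⟩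
  have hε1 : 1 ≤ ε := by
    rw [hε, ← Finset.add_sum_erase _ _ ha1, if_pos hE1]; omega
  have hm : (Pi.single s (4 * ε) : V → ℕ) ≤ ∑ a ∈ A, hf (C a) := by
    have : (Pi.single s (4 * ε) : V → ℕ) = ∑ a ∈ A, (if C a = E then Pi.single s 4 else 0) := by
      funext v
      rw [Finset.sum_apply, hε]
      by_cases hv : v = s
      · subst hv
        rw [Pi.single_eq_same, Finset.mul_sum]
        refine Finset.sum_congr rfl fun a _ => ?_
        by_cases hE : C a = E <;> simp [hE]
      · rw [Pi.single_eq_of_ne hv, Finset.sum_eq_zero]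
        intro a _
        by_cases hE : C a = E <;> simp [hE, hv]
    rw [this]
    refine Finset.sum_le_sum fun a _ => ?_
    by_cases hE : C a = E
    · rw [if_pos hE, hE, hG.half]
    · rw [if_neg hE]
      intro v
      exact Nat.zero_le _
  have hY : ∀ j ∈ B, yS (C j) + 2 * ε ≤ 9 := by
    intro j hj
    have hU' := hU.mono (RR.pull C A j (fun k hk => hAB k hk j hj))
    have h2 := hU'.star3 hG (hB j hj)
    rw [if_pos rfl] at h2
    have h3 := yS_single (C j) s (2 * ε)
    have h4 : yS (C j + Pi.single s (2 * (2 * ε))) ≤ yS (C j + ∑ a ∈ A, hf (C a)) := by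
      apply yS_mono
      have : 2 * (2 * ε) = 4 * ε := by ring
      rw [this]
      gcongr
    omega
  have h1 := hU.pull_bound hG A B hB hA hAB hj0
  have hYs := sum_le_mul (B.erase j0) _ 9 (fun j hj => hY j (Finset.mem_of_mem_erase hj))
  rw [Finset.sum_add_distrib, Finset.sum_const, smul_eq_mul, Finset.card_erase_of_mem hj0,
    hBc] at hYs
  have hYA : ∑ a ∈ A, yS (C a) ≤ 8 * A.card + ε := by
    rw [hε]
    have : 8 * A.card = ∑ a ∈ A, 8 := by rw [Finset.sum_const, smul_eq_mul, mul_comm]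
    rw [this, ← Finset.sum_add_distrib]
    refine Finset.sum_le_sum fun a ha => ?_
    by_cases hE : C a = E
    · rw [if_pos hE, hE, hG.yE]
    · have : ¬ 9 ≤ yS (C a) := fun h => hE (hAE a ha h)
      omega
  rw [← Finset.add_sum_erase B _ hj0, sum_pS A, sum_pS (B.erase j0)] at ht
  rcases hn with rfl | rfl <;> omega

/-- Case A2: all columns at distance two are small. -/
theorem US.caseA2 (hG : Good G r E s) {C : W → V → ℕ} (hU : US G H r a₀ C) (A B : Finset W)
    (hB : ∀ b ∈ B, H.Adj b a₀) (hA : a₀ ∉ A) (hAB : ∀ a ∈ A, ∀ b ∈ B, H.Adj a b)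
    {n : ℕ} (hn : n = 4 ∨ n = 6) (hBc : B.card = n) (hAc : A.card + 1 = n)
    (ht : 16 * n ≤ pS (C a₀) + ∑ a ∈ A, pS (C a) + ∑ b ∈ B, pS (C b))
    (hA8 : ∀ a ∈ A, yS (C a) ≤ 8) : False := by
  have hYA := sum_le_mul A _ 8 hA8
  obtain ⟨j0, hj0⟩ : B.Nonempty := by rw [← Finset.card_pos]; omega
  by_cases hZ : ∃ a ∈ A, 1 ≤ xS (C a)
  · obtain ⟨a2, ha2, hx2⟩ := hZ
    obtain ⟨g, hg⟩ := exists_pair hx2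
    have hja : j0 ≠ a2 := (hAB a2 ha2 j0 hj0).ne.symm
    have hle : (Pi.single g 1 : V → ℕ) ≤ hf (C a2) := by
      intro v
      by_cases hv : v = g
      · subst hv
        simp only [Pi.single_eq_same, hf]
        omega
      · simp [hv]
    obtain ⟨f, hf'⟩ := exists_add_of_le hle
    have hfp : xS (C a2) = 1 + pS f := by
      rw [← pS_hf, hf', pS_add, pS_single]
    have hfv : ∀ v, C a2 v / 2 = (Pi.single g 1 : V → ℕ) v + f v := fun v => congrFun hf' v
    have hU1 := hU.mono (RR.move1 C (hAB a2 ha2 j0 hj0) f (by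
      intro v
      have := hfv v
      omega))
    have hU2 := hU1.mono (RR.pull _ (A.erase a2) j0
      (fun k hk => hAB k (Finset.mem_of_mem_erase hk) j0 hj0))
    have h0 : a₀ ≠ a2 := fun h => hA (h ▸ ha2)
    have hA2 : a₀ ∉ A.erase a2 := fun h => hA (Finset.mem_of_mem_erase h)
    refine hU2.spare hG B hB (a := a2) (hAB a2 ha2) h0 g ?_ (by omega) ?_
    · rw [if_neg hja.symm, if_neg (Finset.notMem_erase a2 A), if_neg hja.symm, if_pos rfl]
      have := hfv g
      rw [Pi.single_eq_same] at this
      omega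
    · rw [if_neg (hB j0 hj0).ne.symm, if_neg hA2, if_neg (hB j0 hj0).ne.symm, if_neg h0,
        ← Finset.add_sum_erase _ _ hj0, if_pos rfl, if_pos rfl, pS_add, pS_add, pS_sum,
        Finset.sum_congr rfl (s₁ := A.erase a2) (g := fun k => xS (C k)) (by
          intro k hk
          rw [if_neg (hAB k (Finset.mem_of_mem_erase hk) j0 hj0).ne,
            if_neg (Finset.ne_of_mem_erase hk), pS_hf]),
        Finset.sum_congr rfl (s₁ := B.erase j0) (g := fun k => pS (C k)) (by
          intro k hk
          have hkB := Finset.mem_of_mem_erase hk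
          have hkj := Finset.ne_of_mem_erase hk
          have hkA : k ∉ A := fun h => (hAB k h k hkB).ne rfl
          rw [if_neg hkj, if_neg (fun h => hkA (Finset.mem_of_mem_erase h)),
            if_neg hkj, if_neg (show k ≠ a2 from fun h => hkA (h ▸ ha2))])]
      rw [sum_pS A, ← Finset.add_sum_erase A (fun a => xS (C a)) ha2,
        ← Finset.add_sum_erase B _ hj0] at ht
      omega
  · push Not at hZ
    have hZ0 : ∑ a ∈ A, xS (C a) = 0 := Finset.sum_eq_zero fun a ha => by
      have := hZ a ha; omega
    rw [sum_pS A, hZ0] at ht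
    have hE : ∃ e ∈ B, C e = E := by
      by_contra hc
      push Not at hc
      have := hU.star4 hG B hB hc
      omega
    obtain ⟨e, he, hCe⟩ := hE
    have hY8 : ∀ b ∈ B.erase e, yS (C b) ≤ 8 := by
      intro b hb
      have hbe := Finset.ne_of_mem_erase hb
      have hbB := Finset.mem_of_mem_erase hb
      refine hU.star2 hG (hB b hbB) fun hc => ?_
      have := hU.star5 hG (hB b hbB) (hB e he) hbe
      rw [hc, hCe, hG.xE] at this
      omega
    have h1 := hU.star1 hG B hB
    rw [← Finset.add_sum_erase B _ he, hCe, hG.xE] at h1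
    have hcardBe := Finset.card_erase_of_mem he
    obtain ⟨j, hj⟩ : (B.erase e).Nonempty := by rw [← Finset.card_pos]; omega
    obtain ⟨a1, ha1⟩ : A.Nonempty := by rw [← Finset.card_pos]; omega
    have hjB := Finset.mem_of_mem_erase hj
    have hje := Finset.ne_of_mem_erase hj
    rw [← Finset.add_sum_erase B _ he, hCe, hG.pE, sum_pS (B.erase e),
      ← Finset.add_sum_erase A _ ha1, ← Finset.add_sum_erase (B.erase e) (fun b => yS (C b)) hj]
      at ht
    have k1 := sum_le_mul (A.erase a1) _ 8 (fun a ha => hA8 a (Finset.mem_of_mem_erase ha))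
    have k2 := sum_le_mul ((B.erase e).erase j) _ 8
      (fun b hb => hY8 b (Finset.mem_of_mem_erase hb))
    rw [Finset.card_erase_of_mem ha1] at k1
    rw [Finset.card_erase_of_mem hj, hcardBe] at k2
    have k3 := hA8 a1 ha1
    have k4 := hY8 j hj
    have k5 := pS_eq (C j)
    have hae := hAB a1 ha1 e he
    have haj := hAB a1 ha1 j hjB
    have hU' := hU.mono (RR.move1 C hae.symm (Pi.single s 4) (by
      intro v; rw [hCe]; exact hG.two_half_le v))
    have hy : yS (C a1 + Pi.single s 4) = yS (C a1) + 2 := yS_single _ _ 2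
    refine hU'.no_mixed hG (a := a1) (b := j) (hB j hjB) haj ?_ ?_ ?_
    · rw [if_neg haj.ne.symm, if_neg hje]
      omega
    · rw [if_pos rfl, hy]
      omega
    · rw [if_pos rfl]
      intro hc
      rw [hc, hG.yE] at hy
      omega

/-- The case of complete bipartite graphs. -/
theorem bipartite_case (hG : Good G r E s) (C : W → V → ℕ) (A B : Finset W)
    (hB : ∀ b ∈ B, H.Adj b a₀) (hA : a₀ ∉ A) (hAB : ∀ a ∈ A, ∀ b ∈ B, H.Adj a b)
    {n : ℕ} (hn : n = 4 ∨ n = 6) (hBc : B.card = n) (hAc : A.card + 1 = n)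
    (ht : 16 * n ≤ pS (C a₀) + ∑ a ∈ A, pS (C a) + ∑ b ∈ B, pS (C b)) :
    RR G H C (Pi.single a₀ (Pi.single r 1)) := by
  by_contra hU
  change US G H r a₀ C at hU
  by_cases h1 : ∃ a ∈ A, 9 ≤ yS (C a) ∧ C a ≠ E
  · obtain ⟨a, ha, hy, hE⟩ := h1
    exact hU.caseB hG A B hB hA hAB hn hBc hAc ht ha hy hE
  · push Not at h1
    by_cases h2 : ∃ a ∈ A, C a = E
    · obtain ⟨a, ha, hE⟩ := h2
      exact hU.caseA1 hG A B hB hA hAB hn hBc hAc ht h1 ha hE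
    · push Not at h2
      refine hU.caseA2 hG A B hB hA hAB hn hBc hAc ht fun a ha => ?_
      have : ¬ 9 ≤ yS (C a) := fun h => h2 a ha (h1 a ha h)
      omega

end bip

/-! ## Checking the hypotheses on the columns by computation

Configurations on eight vertices are packed in base 32. -/

/-- Keep the members with last digit at most `b`, and drop that digit. -/
noncomputable def flt (b : ℕ) (M : List ℕ) : List ℕ :=
  List.rec [] (fun m _ ih =>
    Bool.rec ih (Nat.div m (nat_lit 32) :: ih) (Nat.ble (Nat.mod m (nat_lit 32)) b)) M

/-- Does `0` occur in the list? -/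
noncomputable def hasZero (M : List ℕ) : Bool :=
  List.rec false (fun m _ ih => Bool.rec ih true (Nat.beq m (nat_lit 0))) M

/-- Loop over the possible contributions of one digit. -/
noncomputable def loopK (F : List ℕ → ℕ → Bool) (lim : ℕ → ℕ) (need : ℕ) (n : ℕ)
    (M : List ℕ) : Bool :=
  Nat.rec (F (flt (nat_lit 0) M) need)
    (fun k ih => Bool.rec false ih (F (flt (lim (Nat.succ k)) M) (Nat.sub need (Nat.succ k)))) n

/-- Every `n`-digit configuration of measure at least `need` dominates a member of the list. -/
noncomputable def cover (lim : ℕ → ℕ) (n : ℕ) : List ℕ → ℕ → Bool :=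
  Nat.rec (fun M need => Bool.rec (Nat.ble (nat_lit 1) need) true (hasZero M))
    (fun _ ih M need => Bool.rec (loopK ih lim need need M) true (hasZero M)) n

/-- Some member of the list is dominated by `x`, for `n` digits. -/
noncomputable def chain (n : ℕ) : ℕ → List ℕ → Bool :=
  Nat.rec (fun _ M => hasZero M)
    (fun _ ih x M => ih (Nat.div x (nat_lit 32)) (flt (Nat.mod x (nat_lit 32)) M)) n

/-- All pairwise sums. -/
def sums : List ℕ → List ℕ
  | [] => []
  | m :: t => (m :: t).map (Nat.add m) ++ sums t

/-- Digitwise domination. -/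
def DomF (g : ℕ → ℕ) (m : ℕ) : Prop := ∀ i, m / 32 ^ i % 32 ≤ g i

theorem DomF.cons {g : ℕ → ℕ} {m : ℕ} (h0 : m % 32 ≤ g 0) (h : DomF (fun i => g (i + 1)) (m / 32)) :
    DomF g m := by
  intro i
  cases i with
  | zero => simpa using h0
  | succ i =>
    have := h i
    rwa [Nat.div_div_eq_div_mul, ← pow_succ'] at this

theorem DomF.zero (g : ℕ → ℕ) : DomF g 0 := by
  intro i; simp

theorem flt_cons (b m : ℕ) (M : List ℕ) :
    flt b (m :: M) = if m % 32 ≤ b then m / 32 :: flt b M else flt b M := by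
  by_cases h : m % 32 ≤ b
  · have : Nat.ble (Nat.mod m 32) b = true := by rw [Nat.ble_eq]; exact h
    rw [if_pos h]
    change (Bool.rec (flt b M) (Nat.div m 32 :: flt b M) (Nat.ble (Nat.mod m 32) b) : List ℕ) = _
    rw [this]
    rfl
  · have : Nat.ble (Nat.mod m 32) b = false := by
      rw [← Bool.not_eq_true, Nat.ble_eq]; exact h
    rw [if_neg h]
    change (Bool.rec (flt b M) (Nat.div m 32 :: flt b M) (Nat.ble (Nat.mod m 32) b) : List ℕ) = _
    rw [this]

theorem mem_flt {b x : ℕ} {M : List ℕ} (h : x ∈ flt b M) : ∃ m ∈ M, m % 32 ≤ b ∧ m / 32 = x := by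
  induction M with
  | nil => exact absurd h (by simp [flt])
  | cons m M ih =>
    rw [flt_cons] at h
    by_cases hb : m % 32 ≤ b
    · rw [if_pos hb, List.mem_cons] at h
      rcases h with h | h
      · exact ⟨m, by simp, hb, h.symm⟩
      · obtain ⟨m', h1, h2⟩ := ih h
        exact ⟨m', by simp [h1], h2⟩
    · rw [if_neg hb] at h
      obtain ⟨m', h1, h2⟩ := ih h
      exact ⟨m', by simp [h1], h2⟩

theorem mem_hasZero {M : List ℕ} (h : hasZero M = true) : 0 ∈ M := by
  induction M with
  | nil => exact absurd h (by simp [hasZero])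
  | cons m M ih =>
    change (Bool.rec (hasZero M) true (Nat.beq m 0) : Bool) = true at h
    cases hb : Nat.beq m 0 with
    | true =>
      have := Nat.eq_of_beq_eq_true hb
      simp [this]
    | false =>
      rw [hb] at h
      exact List.mem_cons_of_mem _ (ih h)

theorem loopK_spec {F : List ℕ → ℕ → Bool} {lim : ℕ → ℕ} {need n : ℕ} {M : List ℕ}
    (h : loopK F lim need n M = true) :
    F (flt 0 M) need = true ∧ ∀ k, 1 ≤ k → k ≤ n → F (flt (lim k) M) (need - k) = true := by
  induction n with
  | zero => exact ⟨h, fun k h1 h2 => by omega⟩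
  | succ n ih =>
    change (Bool.rec false (loopK F lim need n M)
      (F (flt (lim (n + 1)) M) (need - (n + 1))) : Bool) = true at h
    cases hb : F (flt (lim (n + 1)) M) (need - (n + 1)) with
    | false => rw [hb] at h; cases h
    | true =>
      rw [hb] at h
      obtain ⟨h1, h2⟩ := ih h
      refine ⟨h1, fun k hk hk' => ?_⟩
      by_cases hkn : k = n + 1
      · subst hkn; exact hb
      · exact h2 k hk (by omega)

theorem cover_spec {lim q : ℕ → ℕ} (hq : ∀ k a, 1 ≤ k → k ≤ q a → lim k ≤ a) (n : ℕ) :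
    ∀ (M : List ℕ) (need : ℕ) (g : ℕ → ℕ), cover lim n M need = true →
      need ≤ ∑ i ∈ Finset.range n, q (g i) → ∃ m ∈ M, DomF g m := by
  induction n with
  | zero =>
    intro M need g h hs
    change (Bool.rec (Nat.ble 1 need) true (hasZero M) : Bool) = true at h
    cases hz : hasZero M with
    | true => exact ⟨0, mem_hasZero hz, DomF.zero g⟩
    | false =>
      rw [hz] at h
      have : 1 ≤ need := by rwa [Nat.ble_eq] at h
      simp at hs
      omega
  | succ n ih =>
    intro M need g h hs
    change (Bool.rec (loopK (cover lim n) lim need need M) true (hasZero M) : Bool) = true at h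
    cases hz : hasZero M with
    | true => exact ⟨0, mem_hasZero hz, DomF.zero g⟩
    | false =>
      rw [hz] at h
      obtain ⟨h0, h1⟩ := loopK_spec h
      rw [Finset.sum_range_succ'] at hs
      by_cases hk : 1 ≤ min need (q (g 0))
      · obtain ⟨m', hm', hd⟩ := ih _ _ (fun i => g (i + 1)) (h1 _ hk (min_le_left _ _)) (by
          omega)
        obtain ⟨m, hm, hb, rfl⟩ := mem_flt hm'
        exact ⟨m, hm, DomF.cons (hb.trans (hq _ _ hk (min_le_right _ _))) hd⟩
      · obtain ⟨m', hm', hd⟩ := ih _ _ (fun i => g (i + 1)) h0 (by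
          omega)
        obtain ⟨m, hm, hb, rfl⟩ := mem_flt hm'
        exact ⟨m, hm, DomF.cons (by omega) hd⟩

theorem chain_spec (n : ℕ) : ∀ (x : ℕ) (M : List ℕ), chain n x M = true →
    ∃ m ∈ M, DomF (fun i => x / 32 ^ i % 32) m := by
  induction n with
  | zero =>
    intro x M h
    exact ⟨0, mem_hasZero h, DomF.zero _⟩
  | succ n ih =>
    intro x M h
    obtain ⟨m', hm', hd⟩ := ih (x / 32) (flt (x % 32) M) h
    obtain ⟨m, hm, hb, rfl⟩ := mem_flt hm'
    refine ⟨m, hm, DomF.cons (by simpa using hb) ?_⟩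
    intro i
    have := hd i
    simpa only [Nat.div_div_eq_div_mul, ← pow_succ'] using this

theorem mem_sums {x : ℕ} {M : List ℕ} (h : x ∈ sums M) : ∃ a ∈ M, ∃ b ∈ M, x = a + b := by
  induction M with
  | nil => simp [sums] at h
  | cons m M ih =>
    rw [sums, List.mem_append, List.mem_map] at h
    rcases h with ⟨b, hb, rfl⟩ | h
    · exact ⟨m, by simp, b, hb, rfl⟩
    · obtain ⟨a, ha, b, hb, e⟩ := ih h
      exact ⟨a, by simp [ha], b, by simp [hb], e⟩

/-- Unpack a configuration. -/
def dec (m : ℕ) : Fin 8 → ℕ := fun i => m / 32 ^ (i : ℕ) % 32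

theorem dec_add {a b : ℕ} (ha : ∀ i, dec a i < 16) (hb : ∀ i, dec b i < 16) :
    dec (a + b) = dec a + dec b := by
  have key : ∀ i, i ≤ 8 → (a + b) / 32 ^ i = a / 32 ^ i + b / 32 ^ i := by
    intro i
    induction i with
    | zero => intro _; simp
    | succ i ih =>
      intro hi
      have h1 := ih (by omega)
      have h2 : a / 32 ^ i % 32 < 16 := ha ⟨i, by omega⟩
      have h3 : b / 32 ^ i % 32 < 16 := hb ⟨i, by omega⟩
      rw [pow_succ, ← Nat.div_div_eq_div_mul, ← Nat.div_div_eq_div_mul,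
        ← Nat.div_div_eq_div_mul, h1]
      omega
  funext i
  have h1 := key i (by omega)
  have h2 := ha i
  have h3 := hb i
  simp only [dec, Pi.add_apply] at h2 h3 ⊢
  rw [h1]
  omega

/-- Validate a list of demands: each is obtained from an earlier one by replacing a
demand of one pebble at `w` by a demand of two at a neighbour `v`. -/
def okAll (G : SimpleGraph (Fin 8)) [DecidableRel G.Adj] : List ℕ → List ℕ → List ℕ → Bool
  | _, [], _ => true
  | _, _ :: _, [] => false
  | seen, m :: t, c :: u =>
    let v : Fin 8 := ⟨c % 8, Nat.mod_lt _ (by omega)⟩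
    let w : Fin 8 := ⟨c / 8 % 8, Nat.mod_lt _ (by omega)⟩
    let p := m + 32 ^ (w : ℕ) - 2 * 32 ^ (v : ℕ)
    seen.any (Nat.beq p) && decide (G.Adj v w) &&
      decide (∀ i : Fin 8, dec m i < 16 ∧ dec m i + (if i = w then 1 else 0)
        = dec p i + (if i = v then 2 else 0)) && okAll G (m :: seen) t u

/-- A validated demand. -/
def Dem (G : SimpleGraph (Fin 8)) (r : Fin 8) (m : ℕ) : Prop :=
  Rch G (dec m) (Pi.single r 1) ∧ ∀ i, dec m i < 16

theorem okAll_spec (G : SimpleGraph (Fin 8)) [DecidableRel G.Adj] (r : Fin 8) (M : List ℕ) :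
    ∀ (seen codes : List ℕ), okAll G seen M codes = true → (∀ m ∈ seen, Dem G r m) →
      ∀ m ∈ M, Dem G r m := by
  induction M with
  | nil => intro _ _ _ _ m hm; simp at hm
  | cons m t ih =>
    intro seen codes h hs
    cases codes with
    | nil => simp [okAll] at h
    | cons c u =>
      rw [okAll] at h
      simp only [Bool.and_eq_true, decide_eq_true_eq, List.any_eq_true] at h
      obtain ⟨⟨⟨⟨p, hp, hpe⟩, hadj⟩, hdig⟩, hrest⟩ := h
      have hpe' := Nat.eq_of_beq_eq_true hpe
      rw [hpe'] at hdig
      have hm : Dem G r m := by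
        refine ⟨?_, fun i => (hdig i).1⟩
        refine Rch.trans ?_ (hs p hp).1
        obtain ⟨v, hv⟩ : ∃ v : Fin 8, v = ⟨c % 8, Nat.mod_lt _ (by omega)⟩ := ⟨_, rfl⟩
        obtain ⟨w, hw⟩ : ∃ w : Fin 8, w = ⟨c / 8 % 8, Nat.mod_lt _ (by omega)⟩ := ⟨_, rfl⟩
        rw [← hv, ← hw] at hadj
        simp only [← hv, ← hw] at hdig
        have hle : (Pi.single v 2 : Fin 8 → ℕ) ≤ dec m := by
          intro i
          change (Pi.single v 2 : Fin 8 → ℕ) i ≤ dec m i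
          by_cases hi : i = v
          · subst hi
            have := (hdig i).2
            rw [if_neg hadj.ne, if_pos rfl] at this
            rw [Pi.single_eq_same]
            omega
          · rw [Pi.single_eq_of_ne hi]
            exact Nat.zero_le _
        obtain ⟨k, hk⟩ := exists_add_of_le hle
        have hpk : dec p = Pi.single w 1 + k := by
          funext i
          have h1 := (hdig i).2
          have h2 := congrFun hk i
          simp only [Pi.add_apply, Pi.single_apply] at h2 ⊢
          omega
        rw [hk, hpk]
        exact (Rch.single_move hadj).add_right k
      intro m' hm'
      rcases List.mem_cons.1 hm' with rfl | hm''
      · exact hm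
      · refine ih (m :: seen) u hrest ?_ m' hm''
        intro x hx
        rcases List.mem_cons.1 hx with rfl | hx
        · exact hm
        · exact hs x hx

theorem DomF.le {f : Fin 8 → ℕ} {m : ℕ}
    (h : DomF (fun i => if h : i < 8 then f ⟨i, h⟩ else 0) m) : dec m ≤ f := by
  intro i
  have := h i
  simp only [Fin.is_lt, dif_pos, Fin.eta] at this
  exact this

theorem sum_range_eight (f : Fin 8 → ℕ) (q : ℕ → ℕ) :
    ∑ i ∈ Finset.range 8, q (if h : i < 8 then f ⟨i, h⟩ else 0) = ∑ i, q (f i) := by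
  rw [Finset.sum_range]
  exact Finset.sum_congr rfl fun i _ => by simp

/-- The measure used for one pebble. -/
def lim1 : ℕ → ℕ := fun k => k
/-- The measure used for two pebbles. -/
def lim2 : ℕ → ℕ := fun k => Nat.sub (Nat.mul (nat_lit 2) k) (nat_lit 1)

theorem mkGood (G : SimpleGraph (Fin 8)) [DecidableRel G.Adj] (r : Fin 8) (e : ℕ) (s : Fin 8)
    (M codes : List ℕ)
    (hE : hf (dec e) = Pi.single s 4 ∧ yS (dec e) = 9 ∧ ∀ v : Fin 8, ∀ i : Fin 8,
      dec (e + 32 ^ (v : ℕ)) i = dec e i + if i = v then 1 else 0)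
    (hr : ∀ i, dec (32 ^ (r : ℕ)) i = if i = r then 1 else 0)
    (hM : okAll G [32 ^ (r : ℕ)] M codes = true)
    (h1 : cover lim1 8 (32 ^ (r : ℕ) :: M) 8 = true)
    (h2 : cover lim2 8 (e :: sums (32 ^ (r : ℕ) :: M)) 9 = true)
    (h3 : ∀ v : Fin 8, chain 8 (e + 32 ^ (v : ℕ)) (sums (32 ^ (r : ℕ) :: M)) = true) :
    Good G r (dec e) s := by
  have hr' : dec (32 ^ (r : ℕ)) = Pi.single r 1 := by
    funext i
    rw [hr i, Pi.single_apply]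
  have hroot : Dem G r (32 ^ (r : ℕ)) := by
    refine ⟨by rw [hr']; exact Rch.of_le (le_refl _), fun i => ?_⟩
    rw [hr i]
    split <;> omega
  have hall : ∀ m ∈ 32 ^ (r : ℕ) :: M, Dem G r m := by
    intro m hm
    rcases List.mem_cons.1 hm with rfl | hm
    · exact hroot
    · refine okAll_spec G r M _ _ hM ?_ m hm
      intro x hx
      rw [List.mem_singleton.1 hx]
      exact hroot
  have hsum : ∀ m ∈ sums (32 ^ (r : ℕ) :: M), Rch G (dec m) (Pi.single r 2) := by
    intro m hm
    obtain ⟨a, ha, b, hb, rfl⟩ := mem_sums hm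
    rw [dec_add (hall a ha).2 (hall b hb).2]
    have := (hall a ha).1.add (hall b hb).1
    rwa [← Pi.single_add] at this
  refine ⟨?_, ?_, hE.1, hE.2.1, by simp⟩
  · intro f hf
    obtain ⟨m, hm, hd⟩ := cover_spec (q := fun a => a) (fun k a _ h => h) 8 _ _
      (fun i => if h : i < 8 then f ⟨i, h⟩ else 0) h1 (by
        have := sum_range_eight f (fun a => a)
        rw [this]
        exact hf)
    exact (Rch.of_le hd.le).trans (hall m hm).1
  · intro f hf hne
    obtain ⟨m, hm, hd⟩ := cover_spec (q := fun a => (a + 1) / 2) (lim := lim2) (fun k a h1 h => by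
        change 2 * k - 1 ≤ a
        have h' : k ≤ (a + 1) / 2 := h
        omega) 8 _ _
      (fun i => if h : i < 8 then f ⟨i, h⟩ else 0) h2 (by
        have := sum_range_eight f (fun a => (a + 1) / 2)
        rw [this]
        exact hf)
    rcases List.mem_cons.1 hm with rfl | hm
    · have hle := hd.le
      obtain ⟨v, hv⟩ : ∃ v, dec m v < f v := by
        by_contra hc
        push Not at hc
        exact hne (le_antisymm hc hle)
      obtain ⟨x, hx, hxd⟩ := chain_spec 8 _ _ (h3 v)
      refine Rch.trans (Rch.of_le ?_) (hsum x hx)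
      intro i
      change dec x i ≤ f i
      have k1 : dec x i ≤ dec (m + 32 ^ (v : ℕ)) i := hxd i
      rw [hE.2.2 v i] at k1
      have k2 : dec m i ≤ f i := hle i
      by_cases hi : i = v
      · subst hi
        rw [if_pos rfl] at k1
        omega
      · rw [if_neg hi] at k1
        omega
    · exact (Rch.of_le hd.le).trans (hsum m hm)

instance : DecidableRel lemkeL.Adj := by unfold lemkeL; infer_instance
instance : DecidableRel lemkeL1.Adj := by unfold lemkeL1; infer_instance
instance : DecidableRel lemkeL2.Adj := by unfold lemkeL2; infer_instance

set_option maxRecDepth 100000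

theorem good_lemkeL_0 : Good lemkeL 0 (dec 310346022912) 7 :=
  mkGood lemkeL 0 310346022912 7
    [64, 2048, 65568, 2098176, 67109888, 2147484672, 131072, 2129952, 4194304, 67141664, 69206016,
    134217728, 1073808384, 2147516448, 2149580800, 2214592512, 4294967296, 68719509536,
    68720526336, 68753032192, 2195456, 35717120, 67207168, 68222976, 1075904512, 1140916224,
    2147581952, 2148597760, 2181103616, 68719575040, 68722622464, 68755128320, 68787634176,
    69795315712, 69860327424, 70868008960, 70900514816, 137438953504, 137438954496, 68721639424,
    68786651136, 69826838528, 70867025920, 137439019008, 137441050624, 137473556480,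
    137506062336, 138513743872, 138546249728, 139586437120, 206158462976, 206159478784,
    206191984640, 207232172032, 274877906944]
    [1, 2, 11, 20, 21, 22, 11, 28, 20, 29, 21, 21, 51, 30, 22, 22, 22, 31, 39, 47, 28, 43, 29, 35,
    51, 51, 30, 35, 43, 31, 39, 47, 39, 55, 55, 39, 47, 31, 39, 31, 31, 55, 31, 31, 39, 47, 39,
    55, 55, 39, 31, 39, 47, 55, 31]
    (by decide) (by decide) (by decide +kernel) (by decide +kernel) (by decide +kernel)
    (by decide +kernel)

theorem good_lemkeL_1 : Good lemkeL 1 (dec 310346022912) 7 :=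
  mkGood lemkeL 1 310346022912 7
    [2, 65536, 2049, 2129920, 67141632, 2147516416, 68719509504, 4096, 2098177, 4194304, 67109889,
    69206016, 134217728, 1073776640, 2147484673, 2149580800, 2214592512, 4294967296, 68721573888,
    68786585600, 70866960384, 137438953472, 35653632, 68159488, 1075841024, 1140852736,
    2148534272, 2181040128, 68753033216, 69793219585, 69793220608]
    [8, 11, 2, 28, 29, 30, 31, 2, 20, 28, 21, 29, 29, 50, 22, 30, 30, 30, 31, 31, 31, 31, 42, 34,
    50, 50, 34, 42, 42, 55, 50]
    (by decide) (by decide) (by decide +kernel) (by decide +kernel) (by decide +kernel)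
    (by decide +kernel)

theorem good_lemkeL_2 : Good lemkeL 2 (dec 310346022912) 7 :=
  mkGood lemkeL 2 310346022912 7
    [2, 2097152, 67108864, 2147483648, 65, 1114112, 33619968, 1073807360, 68720525312,
    68753031168, 128, 131072, 1073774656, 68719542272, 137438953472]
    [16, 20, 21, 22, 1, 35, 43, 51, 39, 47, 1, 35, 25, 39, 39]
    (by decide) (by decide) (by decide +kernel) (by decide +kernel) (by decide +kernel)
    (by decide +kernel)

theorem good_lemkeL_3 : Good lemkeL 3 (dec 310346022912) 7 :=
  mkGood lemkeL 3 310346022912 7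
    [64, 2097152, 67108864, 2147483648, 68719476736, 34, 1050624, 33556480, 1073743872, 4, 4096,
    1073742850]
    [25, 28, 29, 30, 31, 8, 34, 42, 50, 8, 34, 16]
    (by decide) (by decide) (by decide +kernel) (by decide +kernel) (by decide +kernel)
    (by decide +kernel)

theorem good_lemkeL_4 : Good lemkeL 4 (dec 310346022912) 7 :=
  mkGood lemkeL 4 310346022912 7
    [2048, 65536, 68719476736, 1026, 32832, 67109888, 67141632, 2147484672, 2147516416,
    34426847232, 36507222016, 4, 128, 1089, 32802, 67108866, 67108928, 134217728, 2147483650,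
    2147483712, 2214592512, 4294967296, 67, 98]
    [34, 35, 39, 16, 25, 21, 29, 22, 30, 61, 62, 16, 25, 1, 8, 21, 29, 21, 22, 30, 22, 22, 16, 25]
    (by decide) (by decide) (by decide +kernel) (by decide +kernel) (by decide +kernel)
    (by decide +kernel)

theorem good_lemkeL_5 : Good lemkeL 5 (dec 310346022912) 7 :=
  mkGood lemkeL 5 310346022912 7
    [2048, 65536, 68719476736, 1026, 32832, 2098176, 2129920, 2147484672, 2147516416, 34361835520,
    36507222016, 4, 128, 1089, 32802, 2097154, 2097216, 4194304, 2147483650, 2147483712,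
    2149580800, 4294967296, 67, 98]
    [42, 43, 47, 16, 25, 20, 28, 22, 30, 60, 62, 16, 25, 1, 8, 20, 28, 20, 22, 30, 22, 22, 16, 25]
    (by decide) (by decide) (by decide +kernel) (by decide +kernel) (by decide +kernel)
    (by decide +kernel)

theorem good_lemkeL_6 : Good lemkeL 6 (dec 310346022912) 7 :=
  mkGood lemkeL 6 310346022912 7
    [2048, 65536, 68719476736, 1026, 32832, 2098176, 2129920, 67109888, 67141632, 34361835520,
    34426847232, 4, 128, 1089, 32802, 2097154, 2097216, 4194304, 67108866, 67108928, 69206016,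
    134217728, 67, 98]
    [50, 51, 55, 16, 25, 20, 28, 21, 29, 60, 61, 16, 25, 1, 8, 20, 28, 20, 21, 29, 21, 21, 16, 25]
    (by decide) (by decide) (by decide +kernel) (by decide +kernel) (by decide +kernel)
    (by decide +kernel)

theorem good_lemkeL_7 : Good lemkeL 7 (dec 310346022912) 7 :=
  mkGood lemkeL 7 310346022912 7
    [65536, 2097152, 67108864, 2147483648, 32832, 1050624, 33556480, 1073743872, 128, 4096, 32802,
    1049602, 33555458, 1073742850, 98, 3074, 32772, 1048580, 33554436, 1073741828, 1073742913,
    68, 2052, 1073741891, 38, 1030, 8]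
    [59, 60, 61, 62, 25, 34, 42, 50, 25, 34, 8, 16, 16, 16, 25, 34, 8, 16, 16, 16, 1, 25, 34, 16,
    8, 16, 8]
    (by decide) (by decide) (by decide +kernel) (by decide +kernel) (by decide +kernel)
    (by decide +kernel)

theorem good_lemkeL (r : Fin 8) : ∃ E s, Good lemkeL r E s := by
  fin_cases r
  · exact ⟨_, _, good_lemkeL_0⟩
  · exact ⟨_, _, good_lemkeL_1⟩
  · exact ⟨_, _, good_lemkeL_2⟩
  · exact ⟨_, _, good_lemkeL_3⟩
  · exact ⟨_, _, good_lemkeL_4⟩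
  · exact ⟨_, _, good_lemkeL_5⟩
  · exact ⟨_, _, good_lemkeL_6⟩
  · exact ⟨_, _, good_lemkeL_7⟩

theorem good_lemkeL1_0 : Good lemkeL1 0 (dec 310346022912) 7 :=
  mkGood lemkeL1 0 310346022912 7
    [64, 2048, 65568, 2098176, 67109888, 2147484672, 131072, 1115136, 2129952, 4194304, 69206016,
    134217728, 2149580800, 2214592512, 4294967296, 68719509536, 68720526336, 69793219584,
    3211264, 68222976, 2148597760, 34426880032, 36507254816, 68719575040, 68722622464,
    68755128320, 68787634176, 69795315712, 69860327424, 70868008960, 70900514816, 137438953504,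
    137438954496, 35435642880, 35500654592, 36540841984, 68786651136, 69794332672, 70867025920,
    137439019008, 137441050624, 137473556480, 137506062336, 138513743872, 138546249728,
    139586437120, 206158462976, 206159478784, 206191984640, 207232172032, 274877906944]
    [1, 2, 11, 20, 21, 22, 11, 35, 28, 20, 21, 21, 22, 22, 22, 31, 39, 55, 35, 35, 35, 61, 62, 31,
    39, 47, 39, 55, 55, 39, 47, 31, 39, 59, 59, 59, 39, 55, 39, 31, 39, 47, 39, 55, 55, 39, 31,
    39, 47, 55, 31]
    (by decide) (by decide) (by decide +kernel) (by decide +kernel) (by decide +kernel)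
    (by decide +kernel)

theorem good_lemkeL1_1 : Good lemkeL1 1 (dec 310346022912) 7 :=
  mkGood lemkeL1 1 310346022912 7
    [2, 2048, 65536, 2098176, 2129920, 67109888, 2147484672, 68719509504, 4194304, 69206016,
    134217728, 2149580800, 2214592512, 4294967296, 34426880000, 36507254784, 68721573888,
    69793219584, 137438953472, 68787634176, 69860327424, 70868008960, 70900514816]
    [8, 10, 11, 20, 28, 21, 22, 31, 20, 21, 21, 22, 22, 22, 61, 62, 31, 55, 31, 39, 55, 39, 47]
    (by decide) (by decide) (by decide +kernel) (by decide +kernel) (by decide +kernel)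
    (by decide +kernel)

theorem good_lemkeL1_2 : Good lemkeL1 2 (dec 310346022912) 7 :=
  mkGood lemkeL1 2 310346022912 7
    [2, 64, 2097152, 67108864, 2147483648, 65568, 1114112, 68720525312, 68753031168, 69793218560,
    131072, 137438953472]
    [16, 17, 20, 21, 22, 11, 35, 39, 47, 55, 11, 39]
    (by decide) (by decide) (by decide +kernel) (by decide +kernel) (by decide +kernel)
    (by decide +kernel)

theorem good_lemkeL1_3 : Good lemkeL1 3 (dec 310346022912) 7 :=
  mkGood lemkeL1 3 310346022912 7
    [64, 2097152, 68719476736, 34, 2080, 1050624, 34426847232, 36507222016, 4, 2050, 4096,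
    1049602, 68158464, 134217728, 2148533248, 2214592512, 4294967296, 34393294848, 67109890,
    68157442, 1140852736, 2147484674, 2148532226, 2181040128]
    [25, 28, 31, 8, 10, 34, 61, 62, 8, 10, 10, 16, 21, 61, 22, 62, 62, 42, 21, 21, 50, 22, 22, 62]
    (by decide) (by decide) (by decide +kernel) (by decide +kernel) (by decide +kernel)
    (by decide +kernel)

theorem good_lemkeL1_4 : Good lemkeL1 4 (dec 310346022912) 7 :=
  mkGood lemkeL1 4 310346022912 7
    [2048, 65536, 68719476736, 1026, 1088, 32832, 67109888, 2147484672, 34426847232, 36507222016,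
    4, 66, 128, 32802, 67108866, 67108928, 134217728, 2147483650, 2147483712, 2214592512,
    4294967296]
    [34, 35, 39, 16, 17, 25, 21, 22, 61, 62, 16, 17, 17, 8, 21, 21, 21, 22, 22, 22, 22]
    (by decide) (by decide) (by decide +kernel) (by decide +kernel) (by decide +kernel)
    (by decide +kernel)

theorem good_lemkeL1_5 : Good lemkeL1 5 (dec 310346022912) 7 :=
  mkGood lemkeL1 5 310346022912 7
    [2048, 68719476736, 1026, 1088, 2098176, 2147484672, 34359803904, 34361835520, 36507222016, 4,
    66, 128, 131072, 1115136, 2097154, 2097216, 2162688, 4194304, 2147483650, 2147483712,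
    2147549184, 2149580800, 4294967296, 34359771200, 65570, 98368, 1114114, 1114176, 34359771170]
    [42, 47, 16, 17, 20, 22, 59, 60, 62, 16, 17, 17, 59, 35, 20, 20, 60, 20, 22, 22, 62, 22, 22,
    25, 11, 59, 35, 35, 8]
    (by decide) (by decide) (by decide +kernel) (by decide +kernel) (by decide +kernel)
    (by decide +kernel)

theorem good_lemkeL1_6 : Good lemkeL1 6 (dec 310346022912) 7 :=
  mkGood lemkeL1 6 310346022912 7
    [2048, 68719476736, 1026, 1088, 2098176, 67109888, 34359803904, 34361835520, 34426847232, 4,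
    66, 128, 131072, 1115136, 2097154, 2097216, 2162688, 4194304, 67108866, 67108928, 67174400,
    69206016, 134217728, 34359771200, 65570, 98368, 1114114, 1114176, 34359771170]
    [50, 55, 16, 17, 20, 21, 59, 60, 61, 16, 17, 17, 59, 35, 20, 20, 60, 20, 21, 21, 61, 21, 21,
    25, 11, 59, 35, 35, 8]
    (by decide) (by decide) (by decide +kernel) (by decide +kernel) (by decide +kernel)
    (by decide +kernel)

theorem good_lemkeL1_7 : Good lemkeL1 7 (dec 310346022912) 7 :=
  mkGood lemkeL1 7 310346022912 7
    [65536, 2097152, 67108864, 2147483648, 32832, 1050624, 33556480, 1073743872, 128, 4096, 32802,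
    1049602, 1049664, 33555458, 1073742850, 32772, 34818, 1048580, 33554436, 33554498,
    1073741828, 1073741890, 68, 2052, 2114, 38, 1030, 8]
    [59, 60, 61, 62, 25, 34, 42, 50, 25, 34, 8, 16, 17, 16, 16, 8, 10, 16, 16, 17, 16, 17, 25, 34,
    25, 8, 16, 8]
    (by decide) (by decide) (by decide +kernel) (by decide +kernel) (by decide +kernel)
    (by decide +kernel)

theorem good_lemkeL1 (r : Fin 8) : ∃ E s, Good lemkeL1 r E s := by
  fin_cases r
  · exact ⟨_, _, good_lemkeL1_0⟩
  · exact ⟨_, _, good_lemkeL1_1⟩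
  · exact ⟨_, _, good_lemkeL1_2⟩
  · exact ⟨_, _, good_lemkeL1_3⟩
  · exact ⟨_, _, good_lemkeL1_4⟩
  · exact ⟨_, _, good_lemkeL1_5⟩
  · exact ⟨_, _, good_lemkeL1_6⟩
  · exact ⟨_, _, good_lemkeL1_7⟩

theorem good_lemkeL2_0 : Good lemkeL2 0 (dec 310346022912) 7 :=
  mkGood lemkeL2 0 310346022912 7
    [64, 2048, 65568, 2098176, 67109888, 2147484672, 131072, 2129952, 4194304, 69206016,
    134217728, 1073808384, 2147516448, 2149580800, 2214592512, 4294967296, 68719509536,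
    68720526336, 68753032192, 2195456, 68222976, 1075904512, 1140916224, 2147581952, 2148597760,
    34426880032, 68719575040, 68722622464, 68755128320, 68787634176, 69795315712, 69860327424,
    70868008960, 70900514816, 137438953504, 137438954496, 34395455488, 36540841984, 68721639424,
    68786651136, 69826838528, 70867025920, 137439019008, 137441050624, 137473556480,
    137506062336, 138513743872, 138546249728, 139586437120, 206158462976, 206159478784,
    206191984640, 207232172032, 274877906944]
    [1, 2, 11, 20, 21, 22, 11, 28, 20, 21, 21, 51, 30, 22, 22, 22, 31, 39, 47, 28, 35, 51, 51, 30,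
    35, 61, 31, 39, 47, 39, 55, 55, 39, 47, 31, 39, 59, 59, 31, 39, 51, 31, 31, 39, 47, 39, 55,
    55, 39, 31, 39, 47, 55, 31]
    (by decide) (by decide) (by decide +kernel) (by decide +kernel) (by decide +kernel)
    (by decide +kernel)

theorem good_lemkeL2_1 : Good lemkeL2 1 (dec 35736519680) 5 :=
  mkGood lemkeL2 1 35736519680 5
    [2, 65536, 2049, 2129920, 2147516416, 68719509504, 4096, 2098177, 4194304, 67109889, 68190208,
    1073776640, 2147484673, 2149580800, 4294967296, 34426880000, 68721573888, 70866960384,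
    137438953472, 2100224, 67111936, 70254592, 134217729, 134250496, 1075841024, 1142947840,
    2148534272, 2215641088, 34428944384, 36574330880, 68720527360, 68787634176, 69793219585,
    69793220608, 69860327424, 69208064, 134219776, 136314880, 1209008128, 2214594560, 2281701376,
    34395392000, 34495004672, 35500591104, 35567697920, 36540778496, 68786587648, 68853694464,
    201327616, 202375168, 1275068416, 34561064960, 268435456]
    [8, 11, 2, 28, 30, 31, 2, 20, 28, 21, 37, 50, 22, 30, 30, 61, 31, 31, 31, 20, 21, 37, 21, 37,
    50, 53, 34, 37, 61, 61, 34, 37, 55, 50, 53, 21, 21, 37, 53, 22, 37, 42, 61, 61, 61, 42, 37,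
    37, 21, 37, 53, 61, 21]
    (by decide) (by decide) (by decide +kernel) (by decide +kernel) (by decide +kernel)
    (by decide +kernel)

theorem good_lemkeL2_2 : Good lemkeL2 2 (dec 310346022912) 7 :=
  mkGood lemkeL2 2 310346022912 7
    [2, 2097152, 67108864, 2147483648, 65, 1114112, 1073807360, 68720525312, 68753031168, 128,
    131072, 1073774656, 34393358336, 68719542272, 137438953472]
    [16, 20, 21, 22, 1, 35, 51, 39, 47, 1, 35, 25, 59, 39, 39]
    (by decide) (by decide) (by decide +kernel) (by decide +kernel) (by decide +kernel)
    (by decide +kernel)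

theorem good_lemkeL2_3 : Good lemkeL2 3 (dec 310346022912) 7 :=
  mkGood lemkeL2 3 310346022912 7
    [64, 2097152, 2147483648, 68719476736, 34, 1050624, 68157440, 1073743872, 34426847232, 4,
    4096, 67110912, 134217728, 1073742850, 34393294848]
    [25, 28, 30, 31, 8, 34, 37, 50, 61, 8, 34, 37, 37, 16, 42]
    (by decide) (by decide) (by decide +kernel) (by decide +kernel) (by decide +kernel)
    (by decide +kernel)

theorem good_lemkeL2_4 : Good lemkeL2 4 (dec 310346022912) 7 :=
  mkGood lemkeL2 4 310346022912 7
    [2048, 65536, 67108864, 68719476736, 1026, 32832, 2147484672, 2181038080, 36507222016, 4, 128,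
    1089, 32802, 4294967296, 67, 98]
    [34, 35, 37, 39, 16, 25, 22, 46, 62, 16, 25, 1, 8, 22, 16, 25]
    (by decide) (by decide) (by decide +kernel) (by decide +kernel) (by decide +kernel)
    (by decide +kernel)

theorem good_lemkeL2_5 : Good lemkeL2 5 (dec 310346022912) 7 :=
  mkGood lemkeL2 5 310346022912 7
    [2048, 2097152, 2147483648, 68719476736, 1026, 1114112, 1073807360, 34359803904, 4, 1089,
    131072, 1081408, 1073774656, 34359771200, 67, 1152, 98368, 1048704, 1073741952, 34359738496,
    34359771170, 130, 65664, 34359738466, 193, 32960, 256]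
    [42, 44, 46, 47, 16, 35, 51, 59, 16, 1, 35, 25, 25, 25, 16, 1, 35, 25, 25, 25, 8, 16, 35, 25,
    1, 25, 1]
    (by decide) (by decide) (by decide +kernel) (by decide +kernel) (by decide +kernel)
    (by decide +kernel)

theorem good_lemkeL2_6 : Good lemkeL2 6 (dec 310346022912) 7 :=
  mkGood lemkeL2 6 310346022912 7
    [2048, 65536, 67108864, 68719476736, 1026, 32832, 2098176, 35651584, 34361835520, 4, 128,
    1089, 32802, 4194304, 67, 98]
    [50, 51, 53, 55, 16, 25, 20, 44, 60, 16, 25, 1, 8, 20, 16, 25]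
    (by decide) (by decide) (by decide +kernel) (by decide +kernel) (by decide +kernel)
    (by decide +kernel)

theorem good_lemkeL2_7 : Good lemkeL2 7 (dec 310346022912) 7 :=
  mkGood lemkeL2 7 310346022912 7
    [65536, 2097152, 67108864, 2147483648, 32832, 1050624, 33556480, 1073743872, 128, 4096, 32802,
    1049602, 33555458, 1073742850, 98, 3074, 32772, 1048580, 33554436, 1073741828, 1073742913,
    68, 2052, 1073741891, 38, 1030, 8]
    [59, 60, 61, 62, 25, 34, 42, 50, 25, 34, 8, 16, 16, 16, 25, 34, 8, 16, 16, 16, 1, 25, 34, 16,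
    8, 16, 8]
    (by decide) (by decide) (by decide +kernel) (by decide +kernel) (by decide +kernel)
    (by decide +kernel)

theorem good_lemkeL2 (r : Fin 8) : ∃ E s, Good lemkeL2 r E s := by
  fin_cases r
  · exact ⟨_, _, good_lemkeL2_0⟩
  · exact ⟨_, _, good_lemkeL2_1⟩
  · exact ⟨_, _, good_lemkeL2_2⟩
  · exact ⟨_, _, good_lemkeL2_3⟩
  · exact ⟨_, _, good_lemkeL2_4⟩
  · exact ⟨_, _, good_lemkeL2_5⟩
  · exact ⟨_, _, good_lemkeL2_6⟩
  · exact ⟨_, _, good_lemkeL2_7⟩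


/-! ## Pebbling numbers -/

section numbers
variable {V : Type*} [Fintype V] [DecidableEq V]

theorem stuck {G : SimpleGraph V} {c : V → ℕ} (h : ∀ v, c v ≤ 1) {c' : V → ℕ}
    (hr : Relation.ReflTransGen (PebblingMove G) c c') : c' = c := by
  induction hr with
  | refl => rfl
  | tail _ hm ih =>
    subst ih
    obtain ⟨v, w, _, h2, _⟩ := hm
    have := h v
    omega

/-- The pebbling number is at least the number of vertices. -/
theorem card_le_pebblingNumber (G : SimpleGraph V) (r : V)
    (hne : ∃ k, ∀ c : V → ℕ, (∑ v, c v) = k → ∀ r, Solvable G c r) :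
    Fintype.card V ≤ pebblingNumber G := by
  have hmem := Nat.sInf_mem (s := {k | ∀ c : V → ℕ, (∑ v, c v) = k → ∀ r, Solvable G c r}) hne
  change pebblingNumber G ∈ {k | ∀ c : V → ℕ, (∑ v, c v) = k → ∀ r, Solvable G c r} at hmem
  by_contra hc
  push Not at hc
  obtain ⟨S, hS, hcard⟩ := Finset.exists_subset_card_eq
    (s := (Finset.univ.erase r : Finset V)) (n := pebblingNumber G) (by
      rw [Finset.card_erase_of_mem (Finset.mem_univ r), Finset.card_univ]; omega)
  obtain ⟨c', hr, h1⟩ := hmem (fun v => if v ∈ S then 1 else 0) (by simp [hcard]) r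
  have := stuck (fun v => by split <;> omega) hr
  subst this
  have hrS : r ∉ S := fun h => (Finset.mem_erase.1 (hS h)).1 rfl
  simp [hrS] at h1

/-- In a graph of diameter at most two some number of pebbles suffices. -/
theorem solvable_of_diam_two (G : SimpleGraph V)
    (h : ∀ u r : V, u = r ∨ G.Adj u r ∨ ∃ w, G.Adj u w ∧ G.Adj w r) :
    ∃ k, ∀ c : V → ℕ, (∑ v, c v) = k → ∀ r, Solvable G c r := by
  refine ⟨4 * Fintype.card V + 1, fun c hc r => ?_⟩
  obtain ⟨u, hu⟩ : ∃ u, 4 ≤ c u := by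
    by_contra hcon
    push Not at hcon
    have := sum_le_mul Finset.univ c 4 (fun v _ => (hcon v).le)
    rw [hc, Finset.card_univ] at this
    omega
  apply Rch.nsolvable
  have hle : ∀ k, k ≤ 4 → Rch G c (Pi.single u k) := fun k hk => Rch.of_le (by
    intro v
    by_cases hv : v = u
    · subst hv; simp only [Pi.single_eq_same]; omega
    · simp [hv])
  rcases h u r with rfl | h | ⟨w, h1, h2⟩
  · exact hle 1 (by omega)
  · exact (hle 2 (by omega)).trans (Rch.single_move h)
  · exact ((hle 4 (by omega)).trans (Rch.single_moves h1 2)).trans (Rch.single_move h2)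

theorem eight_le (G : SimpleGraph (Fin 8)) (hG : ∀ r, ∃ E s, Good G r E s) :
    8 ≤ pebblingNumber G := by
  have := card_le_pebblingNumber G 0 ⟨8, fun c hc r => by
    obtain ⟨E, s, h⟩ := hG r
    exact (h.one c hc.ge).nsolvable⟩
  simpa using this

theorem le_complete (n : ℕ) (hn : 0 < n) : n ≤ pebblingNumber (⊤ : SimpleGraph (Fin n)) := by
  have := card_le_pebblingNumber (⊤ : SimpleGraph (Fin n)) ⟨0, hn⟩ (solvable_of_diam_two _ (by
    intro u r
    by_cases h : u = r
    · exact Or.inl h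
    · exact Or.inr (Or.inl h)))
  simpa using this

theorem le_bipartite (n : ℕ) (hn : 0 < n) :
    n + n ≤ pebblingNumber (completeBipartiteGraph (Fin n) (Fin n)) := by
  have := card_le_pebblingNumber (completeBipartiteGraph (Fin n) (Fin n)) (Sum.inl ⟨0, hn⟩)
    (solvable_of_diam_two _ (by
      intro u r
      rcases u with u | u <;> rcases r with r | r
      · exact Or.inr (Or.inr ⟨Sum.inr ⟨0, hn⟩, by simp, by simp⟩)
      · exact Or.inr (Or.inl (by simp))
      · exact Or.inr (Or.inl (by simp))
      · exact Or.inr (Or.inr ⟨Sum.inl ⟨0, hn⟩, by simp, by simp⟩)))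
  simpa using this

end numbers

section final
variable {W : Type*} [Fintype W] [DecidableEq W]

theorem prod_le (G : SimpleGraph (Fin 8)) (H : SimpleGraph W) (N : ℕ)
    (h : ∀ (r : Fin 8) (a₀ : W) (C : W → Fin 8 → ℕ), ∑ k, pS (C k) = N →
      RR G H C (Pi.single a₀ (Pi.single r 1))) :
    pebblingNumber (G.boxProd H) ≤ N := by
  apply Nat.sInf_le
  rintro c hc ⟨r, a₀⟩
  have := h r a₀ (fun k v => c (v, k)) (by
    rw [← hc, Fintype.sum_prod_type_right]
    rfl)
  apply Rch.nsolvable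
  refine Rch.trans this (Rch.of_le ?_)
  rintro ⟨v, k⟩
  by_cases hv : v = r <;> by_cases hk : k = a₀
  · subst hv; subst hk; simp [unc]
  · simp [Pi.single_apply, hk]
  · simp [Pi.single_apply, hv]
  · simp [Pi.single_apply, hv]

theorem prod_complete (G : SimpleGraph (Fin 8)) (hG : ∀ r, ∃ E s, Good G r E s) (n : ℕ)
    (hn : 3 ≤ n) : pebblingNumber (G.boxProd (⊤ : SimpleGraph (Fin n)))
      ≤ pebblingNumber G * pebblingNumber (⊤ : SimpleGraph (Fin n)) := by
  refine le_trans (prod_le G _ (8 * n) ?_) (Nat.mul_le_mul (eight_le G hG)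
    (le_complete n (by omega)))
  intro r a₀ C hC
  obtain ⟨E, s, h⟩ := hG r
  have hc : (Finset.univ.erase a₀).card = n - 1 := by
    rw [Finset.card_erase_of_mem (Finset.mem_univ a₀), Finset.card_univ, Fintype.card_fin]
  refine complete_case h C (Finset.univ.erase a₀) ?_ ?_ (by omega) ?_
  · intro b hb
    exact Finset.ne_of_mem_erase hb
  · intro b _ b' _ hne
    exact hne
  · rw [Finset.add_sum_erase _ (fun k => pS (C k)) (Finset.mem_univ a₀), hC, hc]
    omega

theorem prod_bipartite (G : SimpleGraph (Fin 8)) (hG : ∀ r, ∃ E s, Good G r E s) (n : ℕ)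
    (hn : n = 4 ∨ n = 6) : pebblingNumber (G.boxProd (completeBipartiteGraph (Fin n) (Fin n)))
      ≤ pebblingNumber G * pebblingNumber (completeBipartiteGraph (Fin n) (Fin n)) := by
  refine le_trans (prod_le G _ (8 * (n + n)) ?_) (Nat.mul_le_mul (eight_le G hG)
    (le_bipartite n (by omega)))
  intro r a₀ C hC
  obtain ⟨E, s, h⟩ := hG r
  rw [Fintype.sum_sum_type] at hC
  rcases a₀ with a | a
  · refine bipartite_case h C ((Finset.univ.erase a).map Function.Embedding.inl)
      (Finset.univ.map Function.Embedding.inr) ?_ ?_ ?_ hn ?_ ?_ ?_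
    · simp
    · simp
    · simp
    · simp
    · rw [Finset.card_map, Finset.card_erase_of_mem (Finset.mem_univ a), Finset.card_univ,
        Fintype.card_fin]
      omega
    · rw [Finset.sum_map, Finset.sum_map]
      simp only [Function.Embedding.inl_apply, Function.Embedding.inr_apply]
      rw [Finset.add_sum_erase _ (fun k => pS (C (Sum.inl k))) (Finset.mem_univ a)]
      omega
  · refine bipartite_case h C ((Finset.univ.erase a).map Function.Embedding.inr)
      (Finset.univ.map Function.Embedding.inl) ?_ ?_ ?_ hn ?_ ?_ ?_
    · simp
    · simp
    · simp
    · simp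
    · rw [Finset.card_map, Finset.card_erase_of_mem (Finset.mem_univ a), Finset.card_univ,
        Fintype.card_fin]
      omega
    · rw [Finset.sum_map, Finset.sum_map]
      simp only [Function.Embedding.inl_apply, Function.Embedding.inr_apply]
      rw [Finset.add_sum_erase _ (fun k => pS (C (Sum.inr k))) (Finset.mem_univ a)]
      omega

theorem all_products (G : SimpleGraph (Fin 8)) (hG : ∀ r, ∃ E s, Good G r E s) :
      pebblingNumber (G.boxProd (⊤ : SimpleGraph (Fin 8)))
          ≤ pebblingNumber G * pebblingNumber (⊤ : SimpleGraph (Fin 8)) ∧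
      pebblingNumber (G.boxProd (⊤ : SimpleGraph (Fin 12)))
          ≤ pebblingNumber G * pebblingNumber (⊤ : SimpleGraph (Fin 12)) ∧
      pebblingNumber (G.boxProd (completeBipartiteGraph (Fin 4) (Fin 4)))
          ≤ pebblingNumber G * pebblingNumber (completeBipartiteGraph (Fin 4) (Fin 4)) ∧
      pebblingNumber (G.boxProd (completeBipartiteGraph (Fin 6) (Fin 6)))
          ≤ pebblingNumber G * pebblingNumber (completeBipartiteGraph (Fin 6) (Fin 6)) :=
  ⟨prod_complete G hG 8 (by omega), prod_complete G hG 12 (by omega),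
    prod_bipartite G hG 4 (by omega), prod_bipartite G hG 6 (by omega)⟩

end final

/-- Graham's conjectured inequality `π(G □ H) ≤ π(G)·π(H)` holds for every
minimal Lemke graph `G ∈ {L, L₁, L₂}` and every `H ∈ {K₈, K₁₂, K_{4,4}, K_{6,6}}`. -/
theorem stmt14 :
    ∀ G ∈ ({lemkeL, lemkeL1, lemkeL2} : Set (SimpleGraph (Fin 8))),
      pebblingNumber (G.boxProd (⊤ : SimpleGraph (Fin 8)))
          ≤ pebblingNumber G * pebblingNumber (⊤ : SimpleGraph (Fin 8)) ∧
      pebblingNumber (G.boxProd (⊤ : SimpleGraph (Fin 12)))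
          ≤ pebblingNumber G * pebblingNumber (⊤ : SimpleGraph (Fin 12)) ∧
      pebblingNumber (G.boxProd (completeBipartiteGraph (Fin 4) (Fin 4)))
          ≤ pebblingNumber G * pebblingNumber (completeBipartiteGraph (Fin 4) (Fin 4)) ∧
      pebblingNumber (G.boxProd (completeBipartiteGraph (Fin 6) (Fin 6)))
          ≤ pebblingNumber G * pebblingNumber (completeBipartiteGraph (Fin 6) (Fin 6)) := by
  intro G hG
  simp only [Set.mem_insert_iff, Set.mem_singleton_iff] at hG
  rcases hG with rfl | rfl | rfl
  · exact all_products _ good_lemkeL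
  · exact all_products _ good_lemkeL1
  · exact all_products _ good_lemkeL2
end

section
/- The Lemke graph L satisfies π(L) = 8 and π₂(L, 5) = 14 > 2·π(L) − 5 + 1 = 12; consequently L does not have the 2-pebbling property. -/
open SimpleGraph Finset

/-- `G` has the 2-pebbling property: `π₂(G, s) ≤ 2π(G) - s + 1` for all
`s ∈ {1, …, |V(G)|}`. -/
def HasTwoPebblingProperty {V : Type*} (G : SimpleGraph V) [Fintype V] : Prop :=
  ∀ s, 1 ≤ s → s ≤ Fintype.card V →
    twoPebblingNumber G s ≤ 2 * pebblingNumber G - s + 1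

open Relation

/-! ### General facts on pebbling -/

lemma move_mono {V : Type*} {G : SimpleGraph V} {c c' d : V → ℕ} (h : PebblingMove G c c')
    (hd : ∀ v, c v ≤ d v) : ∃ d', PebblingMove G d d' ∧ ∀ v, c' v ≤ d' v := by
  obtain ⟨v, w, hvw, h2, h3, h4, h5⟩ := h
  refine ⟨fun u => d u - c u + c' u, ⟨v, w, hvw, (h2.trans (hd v)), ?_, ?_, ?_⟩, ?_⟩
  · have := hd v
    simp only [h3]
    omega
  · have := hd w
    simp only [h4]
    omega
  · intro u hu hw
    have := hd u
    simp only [h5 u hu hw]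
    omega
  · intro u
    simp

lemma solvable_mono {V : Type*} {G : SimpleGraph V} {c d : V → ℕ} {r : V} {t : ℕ}
    (hd : ∀ v, c v ≤ d v) (h : NSolvable G c r t) : NSolvable G d r t := by
  obtain ⟨c', h, ht⟩ := h
  induction h using ReflTransGen.head_induction_on generalizing d with
  | refl => exact ⟨d, .refl, ht.trans (hd r)⟩
  | head h1 _ ih =>
    obtain ⟨d', hm, hle⟩ := move_mono h1 hd
    obtain ⟨e, he, het⟩ := ih hle
    exact ⟨e, .head hm he, het⟩

lemma nsolvable_of_reach {V : Type*} {G : SimpleGraph V} {c d : V → ℕ} {r : V} {t : ℕ}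
    (hcd : ReflTransGen (PebblingMove G) c d) (h : NSolvable G d r t) : NSolvable G c r t := by
  obtain ⟨e, he, ht⟩ := h
  exact ⟨e, hcd.trans he, ht⟩

/-- The configuration after moving `m` times from `u` to `v`. -/
def shift (c : Fin 8 → ℕ) (u v : Fin 8) (m : ℕ) : Fin 8 → ℕ :=
  fun x => if x = u then c u - 2 * m else if x = v then c v + m else c x

lemma shift_reach {c : Fin 8 → ℕ} {u v : Fin 8} (h : lemkeL.Adj u v) (m : ℕ)
    (hm : 2 * m ≤ c u) : ReflTransGen (PebblingMove lemkeL) c (shift c u v m) := by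
  have hne : v ≠ u := h.ne'
  induction m with
  | zero =>
    have : shift c u v 0 = c := by
      funext x
      unfold shift
      split_ifs with h1 h2 <;> simp_all
    rw [this]
  | succ m ih =>
    refine (ih (by omega)).tail ⟨u, v, h, ?_, ?_, ?_, ?_⟩
    · simp [shift]; omega
    · simp [shift]; omega
    · simp [shift, hne]; omega
    · intro x hx hy
      simp [shift, hx, hy]

/-! ### Packed configurations: digit `i` in base 32 is the number of pebbles on vertex `i` -/

def enc (c : Fin 8 → ℕ) : ℕ := ∑ i, c i * 32 ^ i.val

lemma enc_eq (c : Fin 8 → ℕ) : enc c = c 0 + c 1 * 32 + c 2 * 1024 + c 3 * 32768 +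
    c 4 * 1048576 + c 5 * 33554432 + c 6 * 1073741824 + c 7 * 34359738368 := by
  simp [enc, Fin.sum_univ_eight]

lemma enc_digit (c : Fin 8 → ℕ) (h : ∑ i, c i ≤ 31) (u : Fin 8) :
    enc c / 32 ^ u.val % 32 = c u := by
  rw [enc_eq]
  rw [Fin.sum_univ_eight] at h
  have hu : u = 0 ∨ u = 1 ∨ u = 2 ∨ u = 3 ∨ u = 4 ∨ u = 5 ∨ u = 6 ∨ u = 7 := by
    revert u
    decide
  rcases hu with rfl | rfl | rfl | rfl | rfl | rfl | rfl | rfl <;> norm_num <;> omega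

lemma sum_bump (c : Fin 8 → ℕ) (g : Fin 8 → ℕ) (v : Fin 8) (k : ℕ) :
    ∑ i, (if i = v then c i + k else c i) * g i = ∑ i, c i * g i + k * g v := by
  have : ∀ i, (if i = v then c i + k else c i) * g i
      = c i * g i + if i = v then k * g v else 0 := by
    intro i
    split_ifs with h
    · subst h; ring
    · rfl
  simp [this, Finset.sum_add_distrib]

/-- Add `k` pebbles on `v`. -/
def bump (c : Fin 8 → ℕ) (v : Fin 8) (k : ℕ) : Fin 8 → ℕ :=
  fun i => if i = v then c i + k else c i

lemma enc_bump (c : Fin 8 → ℕ) (v : Fin 8) (k : ℕ) :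
    enc (bump c v k) = enc c + k * 32 ^ v.val :=
  sum_bump c (fun i => 32 ^ i.val) v k

lemma total_bump (c : Fin 8 → ℕ) (v : Fin 8) (k : ℕ) :
    ∑ i, bump c v k i = ∑ i, c i + k := by
  simpa [bump] using sum_bump c (fun _ => 1) v k

lemma bump_shift (c : Fin 8 → ℕ) {u v : Fin 8} (hne : v ≠ u) {m : ℕ} (hm : 2 * m ≤ c u) :
    bump (shift c u v m) u (2 * m) = bump c v m := by
  funext x
  unfold bump shift
  by_cases h1 : x = u
  · subst h1
    simp [hne.symm]
    omega
  · by_cases h2 : x = v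
    · subst h2
      simp [h1]
    · simp [h1, h2]

/-! ### Executing transport plans -/

/-- Apply `f` to `n`, evaluating `n` first. -/
def strict {α : Type} (n : ℕ) (f : ℕ → α) : α :=
  Nat.rec (f 0) (fun k _ => f (Nat.succ k)) n

lemma strict_eq {α : Type} (n : ℕ) (f : ℕ → α) : strict n f = f n := by
  cases n <;> rfl

def minB (a b : ℕ) : ℕ := bif Nat.ble a b then a else b

lemma minB_le_right (a b : ℕ) : minB a b ≤ b := by
  unfold minB
  cases h : Nat.ble a b
  · simp
  · simpa using Nat.le_of_ble_eq_true h

/-- A step `(u, v, k)` of a plan makes as many moves from `u` to `v` as possible, but at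
most `k`. -/
def exec : List (Fin 8 × Fin 8 × ℕ) → ℕ → ℕ
  | [], c => c
  | s :: p, c =>
    strict (minB s.2.2 (Nat.div (Nat.mod (Nat.div c (Nat.pow 32 s.1.val)) 32) 2)) fun m =>
      strict (Nat.sub (Nat.add c (Nat.mul m (Nat.pow 32 s.2.1.val)))
        (Nat.mul (Nat.mul 2 m) (Nat.pow 32 s.1.val))) fun c' => exec p c'

def legal (p : List (Fin 8 × Fin 8 × ℕ)) : Prop := ∀ s ∈ p, lemkeL.Adj s.1 s.2.1

lemma exec_sound (p : List (Fin 8 × Fin 8 × ℕ)) (hp : legal p) (c : Fin 8 → ℕ)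
    (hc : ∑ i, c i ≤ 31) : ∃ d, ReflTransGen (PebblingMove lemkeL) c d ∧
      ∑ i, d i ≤ 31 ∧ exec p (enc c) = enc d := by
  induction p generalizing c with
  | nil => exact ⟨c, .refl, hc, rfl⟩
  | cons s p ih =>
    obtain ⟨u, v, k⟩ := s
    have hadj : lemkeL.Adj u v := hp (u, v, k) (by simp)
    obtain ⟨m, hm⟩ : ∃ m, m = minB k (c u / 2) := ⟨_, rfl⟩
    have hm2 : 2 * m ≤ c u := by
      have := minB_le_right k (c u / 2)
      omega
    have hb := bump_shift c hadj.ne' hm2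
    have h1 := congrArg enc hb
    rw [enc_bump, enc_bump] at h1
    have h2 := congrArg (fun f => ∑ i, f i) hb
    simp only [total_bump] at h2
    obtain ⟨d, hd, hds, hde⟩ := ih (fun s hs => hp s (by simp [hs])) (shift c u v m) (by omega)
    refine ⟨d, (shift_reach hadj m hm2).trans hd, hds, ?_⟩
    rw [← hde]
    have e1 : Nat.div (Nat.mod (Nat.div (enc c) (Nat.pow 32 u.val)) 32) 2 = c u / 2 := by
      change (enc c / 32 ^ u.val % 32) / 2 = c u / 2
      rw [enc_digit c hc u]
    have e2 : Nat.sub (Nat.add (enc c) (Nat.mul m (Nat.pow 32 v.val)))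
        (Nat.mul (Nat.mul 2 m) (Nat.pow 32 u.val)) = enc (shift c u v m) := by
      change enc c + m * 32 ^ v.val - 2 * m * 32 ^ u.val = _
      omega
    simp only [exec, strict_eq, e1, ← hm, e2]

/-- Some plan of the list puts `T` pebbles on `r`. -/
def planOk (r : Fin 8) (T : ℕ) : List (List (Fin 8 × Fin 8 × ℕ)) → ℕ → Bool
  | [], _ => false
  | p :: ps, c =>
    bif Nat.ble T (Nat.mod (Nat.div (exec p c) (Nat.pow 32 r.val)) 32) then true
    else planOk r T ps c

lemma planOk_sound (r : Fin 8) (T : ℕ) (ps : List (List (Fin 8 × Fin 8 × ℕ)))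
    (hps : ∀ p ∈ ps, legal p) (c : Fin 8 → ℕ) (hc : ∑ i, c i ≤ 31)
    (h : planOk r T ps (enc c) = true) : NSolvable lemkeL c r T := by
  induction ps with
  | nil => simp [planOk] at h
  | cons p ps ih =>
    rw [planOk] at h
    cases hb : Nat.ble T (Nat.mod (Nat.div (exec p (enc c)) (Nat.pow 32 r.val)) 32)
    · rw [hb] at h
      exact ih (fun q hq => hps q (by simp [hq])) h
    · obtain ⟨d, hd, hds, hde⟩ := exec_sound p (hps p (by simp)) c hc
      refine ⟨d, hd, ?_⟩
      have := Nat.le_of_ble_eq_true hb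
      rw [hde] at this
      change T ≤ enc d / 32 ^ r.val % 32 at this
      rwa [enc_digit d hds r] at this

/-! ### Exhaustive search with pruning -/

/-- Distribute `rem` further pebbles on the listed vertices in all ways, pruning as soon as
the pebbles placed so far suffice. -/
def search (ok : ℕ → Bool) : ℕ → List (Fin 8) → ℕ → ℕ → Bool
  | 0, _, _, _ => false
  | _ + 1, [], c, _ => ok c
  | f + 1, v :: t, c, rem =>
    match t with
    | [] => strict (Nat.add c (Nat.mul rem (Nat.pow 32 v.val))) ok
    | _ :: _ =>
      bif ok c then true else
      bif Nat.beq rem 0 then false else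
      bif search ok f t c rem then
        strict (Nat.add c (Nat.mul 1 (Nat.pow 32 v.val))) fun c' =>
          strict (Nat.sub rem 1) fun rem' => search ok f (v :: t) c' rem'
      else false

lemma search_sound (r : Fin 8) (T : ℕ) (ok : ℕ → Bool)
    (hok : ∀ c : Fin 8 → ℕ, ∑ i, c i ≤ 31 → ok (enc c) = true → NSolvable lemkeL c r T)
    (f : ℕ) (vs : List (Fin 8)) (c : Fin 8 → ℕ) (rem : ℕ)
    (h : search ok f vs (enc c) rem = true) (d : Fin 8 → ℕ) (hcd : ∀ v, c v ≤ d v)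
    (hout : ∀ v, v ∉ vs → d v = c v) (hsum : ∑ i, d i = ∑ i, c i + rem)
    (hd : ∑ i, d i ≤ 31) : NSolvable lemkeL d r T := by
  have hmain : ok (enc c) = true → NSolvable lemkeL d r T := fun ho =>
    solvable_mono hcd (hok c (by omega) ho)
  induction f generalizing vs c rem with
  | zero => simp [search] at h
  | succ f ih =>
    match vs with
    | [] => exact hmain h
    | [v] =>
      have hle : ∀ x, d x = bump c v (d v - c v) x := by
        intro x
        unfold bump
        split_ifs with hx
        · subst hx
          have := hcd x
          omega
        · exact hout x (by simpa using hx)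
      have hdd : d = bump c v (d v - c v) := funext hle
      have hs : ∑ i, d i = ∑ i, c i + (d v - c v) := by
        conv_lhs => rw [hdd]
        exact total_bump _ _ _
      have hr : rem = d v - c v := by omega
      simp only [search, strict_eq] at h
      have h' : ok (enc d) = true := by
        rw [hdd, enc_bump, ← hr]
        exact h
      exact hok d hd h'
    | v :: w :: t =>
      rw [search] at h
      cases h1 : ok (enc c)
      · cases h2 : Nat.beq rem 0
        · cases h3 : search ok f (w :: t) (enc c) rem
          · simp [h1, h2, h3] at h
          · simp only [h1, h2, h3, cond_true, cond_false, strict_eq] at h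
            have hrem : rem ≠ 0 := by
              rintro rfl
              simp at h2
            by_cases hv : d v = c v
            · refine ih (w :: t) c rem h3 hcd ?_ hsum hmain
              intro x hx
              by_cases hxv : x = v
              · rw [hxv, hv]
              · exact hout x (by simp only [List.mem_cons] at hx ⊢; tauto)
            · have hlt : c v + 1 ≤ d v := by
                have := hcd v
                omega
              have hle : ∀ x, bump c v 1 x ≤ d x := by
                intro x
                unfold bump
                split_ifs with hx
                · rw [hx]; exact hlt
                · exact hcd x
              have htot := total_bump c v 1
              refine ih (v :: w :: t) (bump c v 1) (rem - 1) ?_ hle ?_ (by omega) ?_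
              · rw [enc_bump]
                exact h
              · intro x hx
                have : x ≠ v := by
                  rintro rfl
                  simp at hx
                simp [bump, this, hout x hx]
              · intro ho
                exact solvable_mono hle (hok _ (by omega) ho)
        · simp [h1, h2] at h
      · exact hmain h1

/-- Run `search` for every support of `need` vertices among the listed ones. -/
def searchSupp (ok : ℕ → Bool) : List (Fin 8) → List (Fin 8) → ℕ → ℕ → ℕ → Bool
  | [], vs, c, rem, need => bif Nat.beq need 0 then search ok 40 vs c rem else true
  | u :: us, vs, c, rem, need =>
    bif searchSupp ok us vs c rem need then
      bif Nat.beq need 0 then true else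
        strict (Nat.add c (Nat.mul 1 (Nat.pow 32 u.val))) fun c' =>
          strict (Nat.sub rem 1) fun rem' =>
            strict (Nat.sub need 1) fun need' => searchSupp ok us (u :: vs) c' rem' need'
    else false

lemma searchSupp_sound (r : Fin 8) (T : ℕ) (ok : ℕ → Bool)
    (hok : ∀ c : Fin 8 → ℕ, ∑ i, c i ≤ 31 → ok (enc c) = true → NSolvable lemkeL c r T)
    (us vs : List (Fin 8)) (c : Fin 8 → ℕ) (rem need : ℕ) (hnd : us.Nodup)
    (h : searchSupp ok us vs (enc c) rem need = true) (d : Fin 8 → ℕ) (hcd : ∀ v, c v ≤ d v)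
    (hout : ∀ v, v ∉ us → v ∉ vs → d v = c v) (hus : ∀ v ∈ us, c v = 0)
    (hneed : (us.filter fun v => 1 ≤ d v).length = need)
    (hsum : ∑ i, d i = ∑ i, c i + rem) (hd : ∑ i, d i ≤ 31) : NSolvable lemkeL d r T := by
  induction us generalizing vs c rem need with
  | nil =>
    simp only [List.filter_nil, List.length_nil] at hneed
    subst hneed
    exact search_sound r T ok hok 40 vs c rem h d hcd (fun v hv => hout v (by simp) hv) hsum hd
  | cons u us ih =>
    rw [List.nodup_cons] at hnd
    rw [searchSupp] at h
    cases h1 : searchSupp ok us vs (enc c) rem need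
    · simp [h1] at h
    · by_cases hu : 1 ≤ d u
      · have hn : (us.filter fun v => 1 ≤ d v).length + 1 = need := by
          rw [← hneed, List.filter_cons]
          simp [hu]
        have hnb : Nat.beq need 0 = false := by
          rw [← hn]
          rfl
        simp only [h1, hnb, cond_true, cond_false, strict_eq] at h
        have hcu : c u = 0 := hus u (by simp)
        have hle : ∀ x, bump c u 1 x ≤ d x := by
          intro x
          unfold bump
          split_ifs with hx
          · rw [hx]; omega
          · exact hcd x
        have htot := total_bump c u 1
        have hbs : ∑ i, bump c u 1 i ≤ ∑ i, d i := Finset.sum_le_sum fun i _ => hle i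
        refine ih (u :: vs) (bump c u 1) (rem - 1) (need - 1) hnd.2 ?_ hle ?_ ?_
          (by omega) (by omega)
        · rw [enc_bump]
          exact h
        · intro v hv1 hv2
          simp only [List.mem_cons, not_or] at hv2
          simp [bump, hv2.1, hout v (by simp [hv1, hv2.1]) hv2.2]
        · intro v hv
          have : v ≠ u := by
            rintro rfl
            exact hnd.1 hv
          simp [bump, this, hus v (by simp [hv])]
      · have hu0 : d u = 0 := by omega
        refine ih vs c rem need hnd.2 h1 hcd ?_ (fun v hv => hus v (by simp [hv])) ?_ hsum
        · intro v hv1 hv2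
          by_cases hvu : v = u
          · subst hvu
            have := hcd v
            omega
          · exact hout v (by simp [hv1, hvu]) hv2
        · rw [← hneed, List.filter_cons]
          simp [hu0]

/-! ### The plans -/

def w0 : Fin 8 := ⟨0, by decide⟩
def w1 : Fin 8 := ⟨1, by decide⟩
def w2 : Fin 8 := ⟨2, by decide⟩
def w3 : Fin 8 := ⟨3, by decide⟩
def w4 : Fin 8 := ⟨4, by decide⟩
def w5 : Fin 8 := ⟨5, by decide⟩
def w6 : Fin 8 := ⟨6, by decide⟩
def w7 : Fin 8 := ⟨7, by decide⟩

def rootOrder : Fin 8 → List (Fin 8)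
  | ⟨0, _⟩ => [w0, w1, w2, w3, w4, w5, w6, w7]
  | ⟨1, _⟩ => [w1, w0, w3, w2, w4, w5, w6, w7]
  | ⟨2, _⟩ => [w2, w0, w4, w5, w6, w1, w3, w7]
  | ⟨3, _⟩ => [w3, w1, w4, w5, w6, w7, w0, w2]
  | ⟨4, _⟩ => [w4, w2, w3, w7, w0, w5, w6, w1]
  | ⟨5, _⟩ => [w5, w2, w3, w7, w0, w4, w6, w1]
  | ⟨6, _⟩ => [w6, w2, w3, w7, w0, w4, w5, w1]
  | ⟨7, _⟩ => [w7, w3, w4, w5, w6, w1, w2, w0]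

def rootOrderRev : Fin 8 → List (Fin 8)
  | ⟨0, _⟩ => [w7, w6, w5, w4, w3, w2, w1, w0]
  | ⟨1, _⟩ => [w7, w6, w5, w4, w2, w3, w0, w1]
  | ⟨2, _⟩ => [w7, w3, w1, w6, w5, w4, w0, w2]
  | ⟨3, _⟩ => [w2, w0, w7, w6, w5, w4, w1, w3]
  | ⟨4, _⟩ => [w1, w6, w5, w0, w7, w3, w2, w4]
  | ⟨5, _⟩ => [w1, w6, w4, w0, w7, w3, w2, w5]
  | ⟨6, _⟩ => [w1, w5, w4, w0, w7, w3, w2, w6]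
  | ⟨7, _⟩ => [w0, w2, w1, w6, w5, w4, w3, w7]

/-- Transport plans used to place one pebble on each root. -/
def onePlans : Fin 8 → List (List (Fin 8 × Fin 8 × ℕ))
  | ⟨0, _⟩ => [
    [(w7, w5, 1), (w7, w6, 15), (w5, w2, 15), (w6, w2, 15), (w2, w0, 15)],
    [(w7, w3, 15), (w7, w4, 2), (w4, w3, 15), (w3, w1, 15), (w1, w0, 15)],
    [(w5, w7, 15), (w7, w4, 1), (w3, w6, 15), (w7, w6, 15), (w4, w2, 1), (w6, w2, 15), (w2, w0, 1)],
    [(w7, w5, 1), (w7, w4, 1), (w5, w2, 15), (w4, w2, 1), (w2, w0, 15)],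
    [(w7, w6, 15), (w4, w7, 15), (w6, w2, 15), (w7, w3, 1), (w3, w5, 15), (w6, w2, 15), (w5, w2, 15), (w2, w0, 1)],
    [(w6, w7, 15), (w7, w5, 15), (w5, w3, 15), (w3, w1, 15), (w1, w0, 15)],
    [(w7, w4, 2), (w7, w5, 15), (w1, w3, 15), (w4, w2, 15), (w2, w0, 15), (w5, w2, 15), (w6, w2, 15), (w2, w0, 15), (w7, w4, 15)]]
  | ⟨1, _⟩ => [
    [(w2, w4, 15), (w2, w0, 15), (w7, w4, 15), (w2, w6, 15), (w5, w3, 15), (w6, w3, 15), (w6, w2, 15), (w4, w3, 15), (w3, w1, 15)],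
    [(w5, w3, 15), (w5, w7, 15), (w6, w7, 1), (w5, w7, 15), (w7, w3, 15), (w0, w2, 15), (w2, w4, 15), (w4, w3, 15), (w3, w1, 1)],
    [(w6, w2, 15), (w6, w7, 15), (w4, w7, 15), (w3, w6, 15), (w7, w5, 15), (w5, w2, 1), (w2, w0, 15), (w0, w1, 15)]]
  | ⟨2, _⟩ => [
    [(w5, w2, 15), (w7, w4, 15), (w1, w3, 2), (w3, w4, 15), (w4, w2, 15), (w6, w7, 15), (w7, w5, 15)],
    [(w0, w2, 15), (w0, w1, 15), (w1, w3, 15), (w3, w6, 15), (w6, w2, 15), (w3, w1, 15), (w5, w3, 15), (w5, w2, 15)],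
    [(w1, w0, 15), (w0, w2, 15), (w1, w3, 15), (w3, w7, 1), (w7, w5, 15), (w5, w2, 1)]]
  | ⟨3, _⟩ => [
    [(w2, w0, 15), (w0, w1, 15), (w1, w3, 1)],
    [(w0, w2, 1), (w0, w1, 15), (w2, w4, 15), (w4, w3, 15), (w1, w3, 15)],
    [(w6, w3, 15), (w7, w3, 15), (w1, w3, 15), (w1, w0, 15), (w5, w3, 15)]]
  | ⟨4, _⟩ => [
    [(w1, w3, 15), (w6, w3, 15), (w2, w0, 15), (w3, w4, 15), (w2, w0, 15), (w7, w4, 15)],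
    [(w6, w2, 15), (w5, w2, 15), (w1, w0, 1), (w0, w2, 15), (w0, w2, 15), (w2, w4, 15), (w2, w6, 15)],
    [(w0, w1, 15), (w1, w3, 15), (w3, w5, 1), (w5, w7, 15), (w7, w4, 1)]]
  | ⟨5, _⟩ => [
    [(w0, w1, 15), (w1, w3, 15), (w3, w5, 15)],
    [(w6, w2, 15), (w1, w0, 15), (w4, w2, 15), (w0, w2, 15), (w7, w6, 15), (w7, w3, 15), (w6, w2, 15), (w2, w5, 15)],
    [(w7, w6, 15), (w3, w6, 15), (w6, w3, 15), (w1, w3, 15), (w1, w0, 15), (w4, w3, 15), (w3, w5, 1)],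
    [(w7, w5, 15), (w4, w7, 15), (w3, w5, 1), (w6, w2, 15), (w2, w5, 15)]]
  | ⟨6, _⟩ => [
    [(w1, w3, 15), (w7, w5, 15), (w5, w3, 15), (w4, w3, 15), (w3, w6, 1), (w4, w7, 1), (w2, w6, 15)],
    [(w3, w5, 15), (w1, w0, 1), (w7, w6, 15), (w1, w3, 15), (w3, w5, 15), (w5, w2, 15), (w0, w2, 15), (w2, w6, 1)],
    [(w0, w2, 1), (w4, w2, 15), (w2, w6, 15)],
    [(w0, w1, 1), (w1, w3, 15), (w3, w4, 1), (w4, w7, 15), (w7, w6, 15)]]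
  | ⟨7, _⟩ => [
    [(w0, w2, 3), (w2, w6, 15), (w6, w7, 1)],
    [(w1, w0, 15), (w0, w2, 15), (w2, w4, 15), (w4, w7, 15)],
    [(w5, w3, 15), (w5, w2, 1), (w2, w4, 15), (w3, w6, 15), (w2, w0, 1), (w6, w7, 15), (w4, w3, 15), (w0, w1, 15), (w1, w3, 15), (w3, w7, 15)],
    [(w0, w1, 1), (w0, w2, 15), (w3, w7, 15), (w3, w1, 15), (w2, w5, 15), (w5, w7, 15)]]

/-- Transport plans used to place two pebbles on each root. -/
def twoPlans : Fin 8 → List (List (Fin 8 × Fin 8 × ℕ))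
  | ⟨0, _⟩ => [
    [(w4, w2, 15), (w5, w2, 15), (w7, w3, 3), (w7, w6, 15), (w6, w2, 15), (w2, w0, 15), (w4, w2, 15), (w3, w1, 15), (w1, w0, 15)],
    [(w7, w4, 1), (w7, w5, 1), (w7, w3, 15), (w4, w2, 15), (w7, w6, 1), (w5, w2, 15), (w4, w2, 15), (w2, w0, 15), (w6, w3, 15), (w2, w6, 15), (w3, w1, 15), (w1, w0, 15)],
    [(w4, w7, 1), (w4, w2, 15), (w3, w7, 1), (w3, w6, 1), (w1, w0, 15), (w3, w5, 1), (w7, w5, 15), (w6, w2, 15), (w5, w2, 15), (w2, w0, 2)],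
    [(w7, w5, 1), (w7, w4, 1), (w7, w6, 15), (w4, w2, 15), (w7, w3, 1), (w4, w3, 15), (w6, w2, 1), (w6, w3, 1), (w3, w1, 1), (w3, w5, 1), (w5, w2, 15), (w2, w0, 15), (w1, w0, 1)]]
  | ⟨1, _⟩ => [
    [(w2, w6, 15), (w5, w3, 15), (w5, w7, 15), (w6, w3, 15), (w7, w4, 15), (w4, w3, 15), (w3, w1, 15)],
    [(w4, w3, 1), (w4, w2, 15), (w7, w3, 15), (w5, w2, 15), (w5, w3, 15), (w3, w1, 15), (w3, w6, 2), (w6, w2, 15), (w2, w0, 15), (w2, w0, 15), (w0, w1, 15), (w7, w5, 15)]]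
  | ⟨2, _⟩ => [
    [(w7, w6, 15), (w1, w0, 15), (w1, w3, 15), (w4, w2, 15), (w0, w2, 15), (w4, w3, 1), (w3, w5, 15), (w3, w6, 1), (w5, w2, 15), (w6, w2, 15)]]
  | ⟨3, _⟩ => [
    [(w2, w0, 15), (w0, w1, 15), (w1, w3, 15)],
    [(w2, w4, 15), (w2, w0, 15), (w5, w3, 15), (w5, w3, 15), (w7, w4, 15), (w4, w3, 15)],
    [(w0, w1, 15), (w4, w3, 15), (w0, w2, 15), (w2, w5, 15), (w6, w3, 15), (w1, w3, 15), (w5, w7, 15), (w7, w3, 1)]]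
  | ⟨4, _⟩ => [
    [(w5, w3, 15), (w6, w3, 15), (w2, w4, 15), (w7, w4, 15), (w6, w2, 2), (w2, w0, 1), (w2, w5, 1), (w0, w1, 15), (w1, w3, 15), (w3, w4, 2), (w5, w2, 15)],
    [(w6, w2, 15), (w1, w0, 15), (w0, w2, 15), (w0, w1, 15), (w2, w4, 15), (w0, w1, 15)]]
  | ⟨5, _⟩ => [
    [(w0, w2, 15), (w2, w5, 15), (w0, w1, 1), (w6, w3, 15), (w1, w3, 15), (w3, w5, 15), (w3, w4, 15), (w4, w2, 15), (w2, w5, 15)],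
    [(w4, w7, 15), (w6, w7, 15), (w7, w5, 2)],
    [(w3, w7, 15), (w1, w0, 15), (w6, w3, 1), (w6, w7, 15), (w3, w4, 1), (w3, w7, 1), (w1, w0, 15), (w0, w2, 15), (w2, w5, 15), (w2, w4, 15), (w4, w7, 15), (w7, w5, 15), (w2, w4, 15)]]
  | ⟨6, _⟩ => [
    [(w4, w7, 15), (w5, w3, 15), (w7, w3, 15), (w0, w1, 15), (w1, w3, 15), (w1, w0, 15), (w3, w6, 15)],
    [(w3, w6, 15), (w3, w4, 15), (w5, w7, 15), (w7, w6, 15), (w0, w2, 15), (w4, w2, 15), (w2, w6, 15)],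
    [(w7, w5, 15), (w1, w0, 1), (w1, w3, 15), (w0, w2, 15), (w5, w3, 15), (w3, w6, 15), (w3, w4, 15), (w4, w2, 15), (w2, w6, 15)]]
  | ⟨7, _⟩ => [
    [(w0, w1, 15), (w4, w7, 15), (w2, w4, 15), (w4, w7, 15), (w1, w3, 15), (w3, w7, 15), (w3, w5, 15)],
    [(w6, w7, 15), (w5, w7, 15), (w0, w2, 15), (w2, w6, 15), (w3, w1, 15), (w6, w7, 2)],
    [(w1, w3, 15), (w0, w2, 15), (w2, w5, 1), (w2, w6, 15), (w6, w7, 15), (w2, w4, 15), (w4, w3, 15), (w3, w5, 15), (w3, w6, 15), (w5, w7, 15), (w6, w7, 15)],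
    [(w5, w2, 15), (w0, w2, 2), (w0, w1, 15), (w1, w3, 15), (w6, w3, 15), (w2, w4, 15), (w4, w7, 1), (w3, w7, 1), (w0, w1, 15)]]


instance inst_s16 : DecidableRel lemkeL.Adj := fun a b => by
  unfold lemkeL
  rw [SimpleGraph.fromRel_adj]
  infer_instance

lemma rootOrder_mem : ∀ r v : Fin 8, v ∈ rootOrder r := by decide

lemma rootOrderRev_mem : ∀ r v : Fin 8, v ∈ rootOrderRev r := by decide

lemma rootOrderRev_nodup : ∀ r : Fin 8, (rootOrderRev r).Nodup := by decide

lemma onePlans_legal : ∀ r : Fin 8, ∀ p ∈ onePlans r, legal p := by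
  unfold legal
  decide +kernel

lemma twoPlans_legal : ∀ r : Fin 8, ∀ p ∈ twoPlans r, legal p := by
  unfold legal
  decide +kernel

lemma one_check : ∀ r : Fin 8,
    search (planOk r 1 (onePlans r)) 40 (rootOrder r) 0 8 = true := by
  decide +kernel

lemma two_check : ∀ r : Fin 8,
    searchSupp (planOk r 2 (twoPlans r)) (rootOrderRev r) [] 0 14 5 = true := by
  decide +kernel

/-! ### Upper bounds -/

lemma enc_zero : enc (fun _ => 0) = 0 := by simp [enc]

lemma upper_one (c : Fin 8 → ℕ) (hc : ∑ v, c v = 8) (r : Fin 8) : Solvable lemkeL c r := by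
  refine search_sound r 1 (planOk r 1 (onePlans r))
    (fun c hc h => planOk_sound r 1 _ (onePlans_legal r) c hc h) 40 (rootOrder r)
    (fun _ => 0) 8 ?_ c (fun _ => Nat.zero_le _) ?_ ?_ (by omega)
  · rw [enc_zero]
    exact one_check r
  · intro v hv
    exact absurd (rootOrder_mem r v) hv
  · simp [hc]

lemma upper_two_exact (c : Fin 8 → ℕ) (hc : ∑ v, c v = 14)
    (hs : (Finset.univ.filter fun v => 1 ≤ c v).card = 5) (r : Fin 8) :
    NSolvable lemkeL c r 2 := by
  refine searchSupp_sound r 2 (planOk r 2 (twoPlans r))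
    (fun c hc h => planOk_sound r 2 _ (twoPlans_legal r) c hc h) (rootOrderRev r) []
    (fun _ => 0) 14 5 (rootOrderRev_nodup r) ?_ c (fun _ => Nat.zero_le _) ?_ (fun _ _ => rfl)
    ?_ ?_ (by omega)
  · rw [enc_zero]
    exact two_check r
  · intro v hv
    exact absurd (rootOrderRev_mem r v) hv
  · rw [← hs, ← List.toFinset_card_of_nodup ((rootOrderRev_nodup r).filter _)]
    congr 1
    ext v
    simp [rootOrderRev_mem r v]
  · simp [hc]

lemma upper_two (n : ℕ) : ∀ (c : Fin 8 → ℕ), ∑ v, c v = 14 + n →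
    (Finset.univ.filter fun v => 1 ≤ c v).card = 5 → ∀ r : Fin 8, NSolvable lemkeL c r 2 := by
  induction n with
  | zero => exact fun c hc hs r => upper_two_exact c hc hs r
  | succ n ih =>
    intro c hc hs r
    obtain ⟨v, hv⟩ : ∃ v, 2 ≤ c v := by
      by_contra! hcon
      have : ∑ v, c v ≤ ∑ v : Fin 8, 1 := Finset.sum_le_sum fun i _ => by
        have := hcon i
        omega
      simp at this
      omega
    obtain ⟨d, hd⟩ : ∃ d : Fin 8 → ℕ, d = fun x => if x = v then c x - 1 else c x := ⟨_, rfl⟩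
    have hcd : c = bump d v 1 := by
      funext x
      simp only [bump, hd]
      split_ifs with h
      · subst h; omega
      · rfl
    have htot := total_bump d v 1
    rw [← hcd] at htot
    refine solvable_mono (c := d) ?_ (ih d (by omega) ?_ r)
    · intro x
      rw [hcd]
      unfold bump
      split_ifs <;> omega
    · rw [← hs]
      congr 1
      ext x
      simp only [Finset.mem_filter, Finset.mem_univ, true_and, hd]
      split_ifs with h
      · subst h; omega
      · rfl

/-! ### Lower bounds -/

lemma lower_one (k : ℕ) (hk : k < 8) : ∃ c : Fin 8 → ℕ, ∑ v, c v = k ∧ ¬ Solvable lemkeL c 0 := by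
  refine ⟨fun v => if 1 ≤ v.val ∧ v.val ≤ k then 1 else 0, ?_, ?_⟩
  · interval_cases k <;> decide
  · rintro ⟨c', h, ht⟩
    rcases h.cases_head with h | ⟨d, ⟨v, w, _, h2, _⟩, _⟩
    · rw [← h] at ht
      simp at ht
    · dsimp only at h2
      split_ifs at h2 <;> omega

/-- Weighted number of pebbles; moves never increase it, and two pebbles on vertex `0` weigh
sixteen. -/
def wt (c : Fin 8 → ℕ) : ℕ :=
  8 * c 0 + 4 * c 1 + 4 * c 2 + 2 * c 3 + 2 * c 4 + 2 * c 5 + 2 * c 6 + c 7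

/-- Either too much weight was lost, or only moves towards vertex `0` were made; `a, p, q, s`
count the moves from `7`, the numbers `m, i, j, k` those out of `3, 4, 5, 6`, and `x, y` those
from `1, 2` to `0`. -/
def LemkeInv (c : Fin 8 → ℕ) : Prop :=
  wt c < 16 ∨ ∃ a p q s m i j k x y : ℕ,
    c 7 + 2 * (a + p + q + s) = 9 ∧ c 3 + 2 * m = 1 + a ∧ c 4 + 2 * i = 1 + p ∧
    c 5 + 2 * j = 1 + q ∧ c 6 + 2 * k = 1 + s ∧ c 1 + 2 * x = m ∧ c 2 + 2 * y = i + j + k ∧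
    c 0 = x + y

lemma adj_cases : ∀ v w : Fin 8, lemkeL.Adj v w → (v, w) ∈
    ([(7, 3), (7, 4), (7, 5), (7, 6), (3, 1), (4, 2), (5, 2), (6, 2), (1, 0), (2, 0),
      (0, 1), (0, 2), (1, 3), (2, 4), (2, 5), (2, 6), (3, 4), (3, 5), (3, 6), (3, 7), (4, 7),
      (5, 7), (6, 7), (4, 3), (5, 3), (6, 3)] : List (Fin 8 × Fin 8)) := by decide

lemma move_shift {c c' : Fin 8 → ℕ} {v w : Fin 8} (h3 : c' v = c v - 2)
    (h4 : c' w = c w + 1) (h5 : ∀ u, u ≠ v → u ≠ w → c' u = c u) : c' = shift c v w 1 := by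
  funext x
  unfold shift
  split_ifs with h1 h2
  · rw [h1, h3]
  · rw [h2, h4]
  · exact h5 x h1 h2

lemma inv_move {c c' : Fin 8 → ℕ} (h : PebblingMove lemkeL c c') (hI : LemkeInv c) : LemkeInv c' := by
  obtain ⟨v, w, hvw, h2, h3, h4, h5⟩ := h
  have hs := move_shift h3 h4 h5
  have hmem := adj_cases v w hvw
  clear h3 h4 h5 hvw
  simp only [List.mem_cons, Prod.mk.injEq, List.not_mem_nil, or_false] at hmem
  rcases hI with hI | ⟨a, p, q, s, m, i, j, k, x, y, e7, e3, e4, e5, e6, e1, e2, e0⟩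
  · left
    unfold wt at hI ⊢
    rcases hmem with ⟨rfl, rfl⟩ | ⟨rfl, rfl⟩ | ⟨rfl, rfl⟩ | ⟨rfl, rfl⟩ | ⟨rfl, rfl⟩ | ⟨rfl, rfl⟩ |
      ⟨rfl, rfl⟩ | ⟨rfl, rfl⟩ | ⟨rfl, rfl⟩ | ⟨rfl, rfl⟩ | ⟨rfl, rfl⟩ | ⟨rfl, rfl⟩ | ⟨rfl, rfl⟩ |
      ⟨rfl, rfl⟩ | ⟨rfl, rfl⟩ | ⟨rfl, rfl⟩ | ⟨rfl, rfl⟩ | ⟨rfl, rfl⟩ | ⟨rfl, rfl⟩ | ⟨rfl, rfl⟩ |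
      ⟨rfl, rfl⟩ | ⟨rfl, rfl⟩ | ⟨rfl, rfl⟩ | ⟨rfl, rfl⟩ | ⟨rfl, rfl⟩ | ⟨rfl, rfl⟩ <;>
    · simp only [hs, shift, Fin.reduceEq, if_true, if_false]
      omega
  · rcases hmem with ⟨rfl, rfl⟩ | ⟨rfl, rfl⟩ | ⟨rfl, rfl⟩ | ⟨rfl, rfl⟩ | ⟨rfl, rfl⟩ | ⟨rfl, rfl⟩ |
      ⟨rfl, rfl⟩ | ⟨rfl, rfl⟩ | ⟨rfl, rfl⟩ | ⟨rfl, rfl⟩ | hmem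
    · refine Or.inr ⟨a + 1, p, q, s, m, i, j, k, x, y, ?_⟩
      simp only [hs, shift, Fin.reduceEq, if_true, if_false]
      omega
    · refine Or.inr ⟨a, p + 1, q, s, m, i, j, k, x, y, ?_⟩
      simp only [hs, shift, Fin.reduceEq, if_true, if_false]
      omega
    · refine Or.inr ⟨a, p, q + 1, s, m, i, j, k, x, y, ?_⟩
      simp only [hs, shift, Fin.reduceEq, if_true, if_false]
      omega
    · refine Or.inr ⟨a, p, q, s + 1, m, i, j, k, x, y, ?_⟩
      simp only [hs, shift, Fin.reduceEq, if_true, if_false]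
      omega
    · refine Or.inr ⟨a, p, q, s, m + 1, i, j, k, x, y, ?_⟩
      simp only [hs, shift, Fin.reduceEq, if_true, if_false]
      omega
    · refine Or.inr ⟨a, p, q, s, m, i + 1, j, k, x, y, ?_⟩
      simp only [hs, shift, Fin.reduceEq, if_true, if_false]
      omega
    · refine Or.inr ⟨a, p, q, s, m, i, j + 1, k, x, y, ?_⟩
      simp only [hs, shift, Fin.reduceEq, if_true, if_false]
      omega
    · refine Or.inr ⟨a, p, q, s, m, i, j, k + 1, x, y, ?_⟩
      simp only [hs, shift, Fin.reduceEq, if_true, if_false]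
      omega
    · refine Or.inr ⟨a, p, q, s, m, i, j, k, x + 1, y, ?_⟩
      simp only [hs, shift, Fin.reduceEq, if_true, if_false]
      omega
    · refine Or.inr ⟨a, p, q, s, m, i, j, k, x, y + 1, ?_⟩
      simp only [hs, shift, Fin.reduceEq, if_true, if_false]
      omega
    · left
      have hw : wt c = 17 := by
        unfold wt
        omega
      unfold wt at hw ⊢
      clear e0 e1 e2 e3 e4 e5 e6 e7
      rcases hmem with ⟨rfl, rfl⟩ | ⟨rfl, rfl⟩ | ⟨rfl, rfl⟩ |
        ⟨rfl, rfl⟩ | ⟨rfl, rfl⟩ | ⟨rfl, rfl⟩ | ⟨rfl, rfl⟩ | ⟨rfl, rfl⟩ | ⟨rfl, rfl⟩ | ⟨rfl, rfl⟩ |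
        ⟨rfl, rfl⟩ | ⟨rfl, rfl⟩ | ⟨rfl, rfl⟩ | ⟨rfl, rfl⟩ | ⟨rfl, rfl⟩ | ⟨rfl, rfl⟩ <;>
      · simp only [hs, shift, Fin.reduceEq, if_true, if_false]
        omega

lemma inv_small {c : Fin 8 → ℕ} (hI : LemkeInv c) : c 0 < 2 := by
  rcases hI with hI | ⟨a, p, q, s, m, i, j, k, x, y, e7, e3, e4, e5, e6, e1, e2, e0⟩
  · unfold wt at hI
    omega
  · by_contra hcon
    have h1 : x < 2 := by omega
    have h2 : y < 2 := by omega
    have hx : x = 1 := by omega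
    have hy : y = 1 := by omega
    subst hx hy
    have : 3 ≤ a := by omega
    have : p + q + s ≤ 1 := by omega
    omega

def badConfig : Fin 8 → ℕ := ![0, 0, 0, 1, 1, 1, 1, 9]

lemma lower_two : ¬ NSolvable lemkeL badConfig 0 2 := by
  rintro ⟨c', h, ht⟩
  have hI : LemkeInv c' := by
    clear ht
    induction h with
    | refl => exact Or.inr ⟨0, 0, 0, 0, 0, 0, 0, 0, 0, 0, by decide⟩
    | tail _ hm ih => exact inv_move hm ih
  have := inv_small hI
  omega

lemma pebbling_eq : pebblingNumber lemkeL = 8 := by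
  refine IsLeast.csInf_eq ⟨fun c hc r => upper_one c hc r, fun k hk => ?_⟩
  by_contra! hlt
  obtain ⟨c, hc, hn⟩ := lower_one k hlt
  exact hn (hk c hc 0)

lemma two_pebbling_eq : twoPebblingNumber lemkeL 5 = 14 := by
  refine IsLeast.csInf_eq ⟨fun r c hc hs => ?_, fun m hm => ?_⟩
  · exact upper_two (∑ v, c v - 14) c (by omega) hs r
  · by_contra! hlt
    have hsum : ∑ v, badConfig v = 13 := by decide
    exact lower_two (hm 0 badConfig (by omega) (by decide))

/-- the Lemke graph satisfies `π(L) = 8` and `π₂(L, 5) = 14 > 12 =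
2π(L) - 5 + 1`; consequently `L` does not have the 2-pebbling property. -/
theorem stmt16 :
    pebblingNumber lemkeL = 8 ∧
    twoPebblingNumber lemkeL 5 = 14 ∧
    2 * pebblingNumber lemkeL - 5 + 1 = 12 ∧
    12 < twoPebblingNumber lemkeL 5 ∧
    ¬ HasTwoPebblingProperty lemkeL := by
  refine ⟨pebbling_eq, two_pebbling_eq, ?_, ?_, ?_⟩
  · rw [pebbling_eq]
  · rw [two_pebbling_eq]
    norm_num
  · intro h
    have := h 5 (by norm_num) (by simp)
    rw [pebbling_eq, two_pebbling_eq] at this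
    omega
end
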